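/- Let M ∈ Mat_{m,n}(ℤ≥0) and write RSK(M) = (P, Q). Then for all 1 ≤ i ≤ m−1 and 1 ≤ j ≤ n−1: RSK(f_i^row(M)) = (f_i(P), Q), RSK(e_i^row(M)) = (e_i(P), Q), RSK(f_j^col(M)) = (P, f_j(Q)), and RSK(e_j^col(M)) = (P, e_j(Q)); here the matrix operator returns ∅ exactly when the corresponding tableau crystal operator returns ∅. -/

import Mathlib

namespace GCS

/-- Given a labelled word whose letter `cl` plays the role of a closing bracket `)` and
whose letter `op` plays the role of an opening bracket `(`, with `o` the number of currently
unmatched opening brackets seen so far, return the label of the rightmost unmatched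
closing bracket (or `none` if every closing bracket is matched). -/
def lastUnmatched {β : Type} (cl op : ℕ) : List (ℕ × β) → ℕ → Option β
  | [], _ => none
  | (a, lbl) :: rest, o =>
    if a = cl then
      if o = 0 then
        match lastUnmatched cl op rest 0 with
        | some x => some x
        | none => some lbl
      else lastUnmatched cl op rest (o - 1)
    else if a = op then lastUnmatched cl op rest (o + 1)
    else lastUnmatched cl op rest o

variable {m n : ℕ}

/-- The labelled row word of a matrix of nonnegative integers: read the columns left to
right, each column top to bottom, recording `M r c` copies of the (1-based) row index
`r + 1`, each labelled by its column `c`. -/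
def rowWordLbl (M : Matrix (Fin m) (Fin n) ℕ) : List (ℕ × Fin n) :=
  (List.finRange n).flatMap fun c =>
    (List.finRange m).flatMap fun r => List.replicate (M r c) (r.1 + 1, c)

/-- The row word `row(M)` (letters are 1-based row indices). -/
def rowWord (M : Matrix (Fin m) (Fin n) ℕ) : List ℕ := (rowWordLbl M).map Prod.fst

/-- The column word `col(M) = row(Mᵀ)`. -/
def colWord (M : Matrix (Fin m) (Fin n) ℕ) : List ℕ := rowWord M.transpose

/-- The lowering bicrystal operator `f_i^row` (here `i` is the 1-based row index,
`1 ≤ i ≤ m - 1`): locate the rightmost unmatched `)` in `bracket_i(row(M))`, coming from an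
entry in row `i` and some column `c`; decrease that entry by one and increase the entry of
row `i+1`, column `c` by one.  Returns `none` if every `)` is matched. -/
def frow (i : ℕ) (M : Matrix (Fin m) (Fin n) ℕ) : Option (Matrix (Fin m) (Fin n) ℕ) :=
  (lastUnmatched i (i + 1) (rowWordLbl M) 0).map fun c =>
    Matrix.of fun a b =>
      if a.1 + 1 = i ∧ b = c then M a b - 1
      else if a.1 + 1 = i + 1 ∧ b = c then M a b + 1
      else M a b

/-- The raising bicrystal operator `e_i^row`: locate the leftmost unmatched `(` in
`bracket_i(row(M))`, coming from an entry in row `i+1` and some column `c`; decrease that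
entry by one and increase the entry of row `i`, column `c` by one. -/
def erow (i : ℕ) (M : Matrix (Fin m) (Fin n) ℕ) : Option (Matrix (Fin m) (Fin n) ℕ) :=
  (lastUnmatched (i + 1) i (rowWordLbl M).reverse 0).map fun c =>
    Matrix.of fun a b =>
      if a.1 + 1 = i + 1 ∧ b = c then M a b - 1
      else if a.1 + 1 = i ∧ b = c then M a b + 1
      else M a b

/-- `f_j^col(M) = (f_j^row(Mᵀ))ᵀ`. -/
def fcol (j : ℕ) (M : Matrix (Fin m) (Fin n) ℕ) : Option (Matrix (Fin m) (Fin n) ℕ) :=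
  (frow j M.transpose).map Matrix.transpose

/-- `e_j^col(M) = (e_j^row(Mᵀ))ᵀ`. -/
def ecol (j : ℕ) (M : Matrix (Fin m) (Fin n) ℕ) : Option (Matrix (Fin m) (Fin n) ℕ) :=
  (erow j M.transpose).map Matrix.transpose

/-- `I` is (the set of cut indices of) a Levi datum for size `m`:
`I = {0 = i_0 < i_1 < ⋯ < i_r = m}`. -/
def IsLeviDatum (m : ℕ) (I : Finset ℕ) : Prop := 0 ∈ I ∧ m ∈ I ∧ ∀ x ∈ I, x ≤ m

/-- The admissible bicrystal operators for the Levi datum `(𝐈, 𝐉)` are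
`f_i^row, e_i^row` for `i ∉ 𝐈` and `f_j^col, e_j^col` for `j ∉ 𝐉`. -/
def AdmissibleOp (m n : ℕ) (I J : Finset ℕ)
    (φ : Matrix (Fin m) (Fin n) ℕ → Option (Matrix (Fin m) (Fin n) ℕ)) : Prop :=
  (∃ i, 0 < i ∧ i < m ∧ i ∉ I ∧ (φ = frow i ∨ φ = erow i)) ∨
  (∃ j, 0 < j ∧ j < n ∧ j ∉ J ∧ (φ = fcol j ∨ φ = ecol j))

/-- A set `S` of exponent matrices is `(𝐈,𝐉)`-bicrystal closed if `φ(M) ∈ S ∪ {∅}` for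
every admissible operator `φ` and every `M ∈ S`. -/
def BicrystalClosed (m n : ℕ) (I J : Finset ℕ) (S : Set (Matrix (Fin m) (Fin n) ℕ)) : Prop :=
  ∀ φ, AdmissibleOp m n I J φ → ∀ M ∈ S, ∀ N, φ M = some N → N ∈ S

/-- A term order on monomials in variables indexed by `σ`: a linear order on exponent
vectors compatible with addition and having `0` (i.e. the monomial `1`) as minimum. -/
structure TermOrder (σ : Type) where
  le : (σ →₀ ℕ) → (σ →₀ ℕ) → Prop
  le_refl : ∀ u, le u u
  le_trans : ∀ u v w, le u v → le v w → le u w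
  le_antisymm : ∀ u v, le u v → le v u → u = v
  le_total : ∀ u v, le u v ∨ le v u
  add_le_add : ∀ u v w, le u v → le (u + w) (v + w)
  zero_le : ∀ u, le 0 u

/-- `u` is the exponent vector of the initial term `init_≺ f`: it lies in the support of
`f` and is `≺`-largest among the monomials of `f`.  (If `f = 0`, no `u` satisfies this.) -/
def IsInitExp {σ : Type} (ord : TermOrder σ) (f : MvPolynomial σ ℂ) (u : σ →₀ ℕ) : Prop :=
  u ∈ f.support ∧ ∀ v ∈ f.support, ord.le v u

/-- The initial ideal `init_≺ I = ⟨init_≺ f : f ∈ I, f ≠ 0⟩`. -/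
noncomputable def initialIdeal {σ : Type} (ord : TermOrder σ) (I : Ideal (MvPolynomial σ ℂ)) :
    Ideal (MvPolynomial σ ℂ) :=
  Ideal.span {p | ∃ f ∈ I, ∃ u, IsInitExp ord f u ∧ p = MvPolynomial.monomial u (1 : ℂ)}

/-- The exponent vector of the monomial `z^M` attached to the matrix `M`. -/
noncomputable def expOf (M : Matrix (Fin m) (Fin n) ℕ) : (Fin m × Fin n) →₀ ℕ :=
  Finsupp.equivFunOnFinite.symm fun p => M p.1 p.2

/-- `Mat_≺ I`, the set of exponent matrices of monomials lying in `init_≺ I`. -/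
def matLT (ord : TermOrder (Fin m × Fin n)) (I : Ideal (MvPolynomial (Fin m × Fin n) ℂ)) :
    Set (Matrix (Fin m) (Fin n) ℕ) :=
  {M | MvPolynomial.monomial (expOf M) (1 : ℂ) ∈ initialIdeal ord I}

/-- Indices `a`, `b` (0-based) lie in the same diagonal block determined by the cuts `I`. -/
def SameBlock (I : Finset ℕ) (a b : ℕ) : Prop := ∀ i ∈ I, (a < i ↔ b < i)

/-- `g` belongs to the block-diagonal Levi subgroup `L_𝐈 ≤ GL_m`: `g` is invertible and
vanishes outside the diagonal blocks cut out by `I`. -/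
def InLevi {m : ℕ} (I : Finset ℕ) (g : Matrix (Fin m) (Fin m) ℂ) : Prop :=
  IsUnit g ∧ ∀ a b : Fin m, ¬ SameBlock I a.1 b.1 → g a b = 0

/-- The action of the pair `(g, h)` on `ℂ[Mat_{m,n}]`: `((g,h)·f)(Z) = f(g Z hᵀ)`,
i.e. the substitution `z_{ab} ↦ ∑_{c,d} g_{ac} h_{bd} z_{cd}`. -/
noncomputable def leviAct (g : Matrix (Fin m) (Fin m) ℂ) (h : Matrix (Fin n) (Fin n) ℂ) :
    MvPolynomial (Fin m × Fin n) ℂ →ₐ[ℂ] MvPolynomial (Fin m × Fin n) ℂ :=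
  MvPolynomial.aeval fun p => ∑ c : Fin m, ∑ d : Fin n,
    MvPolynomial.C (g p.1 c * h p.2 d) * MvPolynomial.X (c, d)

/-- The ideal `Idl` is stable under the action of `L_𝐈 × L_𝐉`. -/
def LeviStable (I J : Finset ℕ) (Idl : Ideal (MvPolynomial (Fin m × Fin n) ℂ)) : Prop :=
  ∀ g h, InLevi I g → InLevi J h → ∀ f ∈ Idl, leviAct g h f ∈ Idl

/-- An `L_𝐈 × L_𝐉`-stable ideal `Idl` is `(𝐈,𝐉,≺)`-bicrystalline: the set of exponent
matrices of the standard monomials (monomials not in `init_≺ Idl`) is bicrystal closed. -/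
def IsBicrystalline (m n : ℕ) (I J : Finset ℕ) (ord : TermOrder (Fin m × Fin n))
    (Idl : Ideal (MvPolynomial (Fin m × Fin n) ℂ)) : Prop :=
  LeviStable I J Idl ∧ BicrystalClosed m n I J {M | M ∉ matLT ord Idl}

/-- `z^a` divides `z^b` entrywise, both optional values being defined. -/
def OptDvd (x y : Option (Matrix (Fin m) (Fin n) ℕ)) : Prop :=
  ∃ a b, x = some a ∧ y = some b ∧ ∀ p q, a p q ≤ b p q

/-- `T` is a test set for `(Idl, ≺, φ)`: a finite subset of `Mat_≺ Idl` such that for every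
`M ∈ Mat_≺ Idl` with `φ(M) ≠ ∅` there is `N ∈ T` with `φ(N) ≠ ∅`, `z^N ∣ z^M` and
`z^{φ(N)} ∣ z^{φ(M)}`. -/
def IsTestSet (ord : TermOrder (Fin m × Fin n)) (Idl : Ideal (MvPolynomial (Fin m × Fin n) ℂ))
    (φ : Matrix (Fin m) (Fin n) ℕ → Option (Matrix (Fin m) (Fin n) ℕ))
    (T : Set (Matrix (Fin m) (Fin n) ℕ)) : Prop :=
  T.Finite ∧ T ⊆ matLT ord Idl ∧
  ∀ M ∈ matLT ord Idl, (∃ M', φ M = some M') →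
    ∃ N ∈ T, (∀ p q, N p q ≤ M p q) ∧ OptDvd (φ N) (φ M)

/-- `T` is a test set that is minimal with respect to containment among all test sets. -/
def MinimalTestSet (ord : TermOrder (Fin m × Fin n))
    (Idl : Ideal (MvPolynomial (Fin m × Fin n) ℂ))
    (φ : Matrix (Fin m) (Fin n) ℕ → Option (Matrix (Fin m) (Fin n) ℕ))
    (T : Set (Matrix (Fin m) (Fin n) ℕ)) : Prop :=
  IsTestSet ord Idl φ T ∧ ∀ T', IsTestSet ord Idl φ T' → T' ⊆ T → T' = T

/-- The entry of `M` in 1-based row `r` and column `c` (0 outside the matrix). -/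
def entRow (M : Matrix (Fin m) (Fin n) ℕ) (r : ℕ) (c : Fin n) : ℕ :=
  if h : 1 ≤ r ∧ r ≤ m then M ⟨r - 1, by omega⟩ c else 0

/-- The generic `d × d` minor of `Z` with row set `r` and column set `c`. -/
noncomputable def genMinor (m n d : ℕ) (r : Fin d → Fin m) (c : Fin d → Fin n) :
    MvPolynomial (Fin m × Fin n) ℂ :=
  (Matrix.of fun i j : Fin d => MvPolynomial.X (r i, c j)).det

/-- The exponent vector of the antidiagonal term of the minor with rows `r`, columns `c`. -/
noncomputable def antidiagExp (m n d : ℕ) (r : Fin d → Fin m) (c : Fin d → Fin n) :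
    (Fin m × Fin n) →₀ ℕ :=
  ∑ i : Fin d, Finsupp.single (r i, c i.rev) 1

/-- `ord` is an antidiagonal term order: the lead term of every minor of the generic
matrix `Z` is its antidiagonal term. -/
def IsAntidiagonalOrder (m n : ℕ) (ord : TermOrder (Fin m × Fin n)) : Prop :=
  ∀ d, 0 < d → ∀ (r : Fin d → Fin m) (c : Fin d → Fin n), StrictMono r → StrictMono c →
    IsInitExp ord (genMinor m n d r c) (antidiagExp m n d r c)

/-- All `d × d` minors of the contiguous submatrix `[a,a'] × [b,b']` of `Z`
(1-based bounds). -/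
def minorsOfSub (m n : ℕ) (a a' b b' d : ℕ) : Set (MvPolynomial (Fin m × Fin n) ℂ) :=
  {p | ∃ (r : Fin d → Fin m) (c : Fin d → Fin n), StrictMono r ∧ StrictMono c ∧
    (∀ i, a ≤ (r i).1 + 1 ∧ (r i).1 + 1 ≤ a') ∧
    (∀ j, b ≤ (c j).1 + 1 ∧ (c j).1 + 1 ≤ b') ∧ p = genMinor m n d r c}

/-- `G` is a Gröbner basis of `Idl` with respect to `ord`:
`G ⊆ Idl` and `init_≺ Idl = ⟨init_≺ g : g ∈ G⟩`. -/
def IsGroebnerBasis (ord : TermOrder (Fin m × Fin n))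
    (Idl : Ideal (MvPolynomial (Fin m × Fin n) ℂ))
    (G : Set (MvPolynomial (Fin m × Fin n) ℂ)) : Prop :=
  G ⊆ (Idl : Set (MvPolynomial (Fin m × Fin n) ℂ)) ∧
  initialIdeal ord Idl =
    Ideal.span {p | ∃ g ∈ G, ∃ u, IsInitExp ord g u ∧ p = MvPolynomial.monomial u (1 : ℂ)}

/-- The priority of the variable `z_{ij}` in the variable order
`z_{1n} ≻ z_{1,n-1} ≻ ⋯ ≻ z_{11} ≻ z_{2n} ≻ ⋯ ≻ z_{m1}` (smaller rank = larger variable). -/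
def lexRank (m n : ℕ) (p : Fin m × Fin n) : ℕ := p.1.1 * n + (n - 1 - p.2.1)

/-- `ord` is the (antidiagonal) lexicographic term order determined by the variable order
`z_{1n} ≻ z_{1,n-1} ≻ ⋯ ≻ z_{11} ≻ z_{2n} ≻ ⋯ ≻ z_{m1}`. -/
def IsAntidiagLex (m n : ℕ) (ord : TermOrder (Fin m × Fin n)) : Prop :=
  ∀ u v, ord.le u v ↔
    u = v ∨ ∃ p, u p < v p ∧ ∀ q, lexRank m n q < lexRank m n p → u q = v q

/-- The rank function `r_v(i,j) = #{k ≤ i : v(k) ≤ j}` (1-based), at 0-based `(i,j)`. -/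
def rankP (N : ℕ) (v : Equiv.Perm (Fin N)) (i j : Fin N) : ℕ :=
  (Finset.univ.filter fun k : Fin N => k ≤ i ∧ v k ≤ j).card

/-- The antidiagonal drift `drift_v(i,j) = i + j - 1 - r_v(i,j)` (1-based), at 0-based
`(i,j)`. -/
def driftP (N : ℕ) (v : Equiv.Perm (Fin N)) (i j : Fin N) : ℕ :=
  i.1 + j.1 + 1 - rankP N v i j

/-- The specialized matrix `Z_v`: ones on the permutation positions, zeros southwest-ward
of them (positions `(i,j)` with `j > v(i)` or `i > v⁻¹(j)`), variables elsewhere. -/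
noncomputable def Zv (N : ℕ) (v : Equiv.Perm (Fin N)) :
    Matrix (Fin N) (Fin N) (MvPolynomial (Fin N × Fin N) ℂ) :=
  Matrix.of fun i j =>
    if v i = j then 1 else if v i < j ∨ v.symm j < i then 0 else MvPolynomial.X (i, j)

/-- The `k`-th basic minor `Δ_v^{(k)}`: the determinant of the northwest-justified
`k × k` submatrix of `Z_v`. -/
noncomputable def basicMinor (N k : ℕ) (hk : k ≤ N) (v : Equiv.Perm (Fin N)) :
    MvPolynomial (Fin N × Fin N) ℂ :=
  (Matrix.of fun i j : Fin k => Zv N v (Fin.castLE hk i) (Fin.castLE hk j)).det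

/-- The one-coordinate index-deletion map underlying `φ_{i,j}`: delete the index `i`
from `[n+1]`, renumbering the indices above `i` down by one. -/
def delIdx {N : ℕ} (i a : Fin (N + 1)) (h : a ≠ i) : Fin N :=
  if hlt : a.1 < i.1 then ⟨a.1, by have := i.isLt; omega⟩
  else ⟨a.1 - 1, by
    have h1 := a.isLt
    have h2 : a.1 ≠ i.1 := fun hh => h (Fin.ext hh)
    omega⟩

/-- Row insertion `T ← x` for a tableau given as its list of rows (top to bottom). -/
def rowInsert : List (List ℕ) → ℕ → List (List ℕ)
  | [], x => [[x]]
  | row :: rest, x =>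
    match row.findIdx? (fun y => decide (x < y)) with
    | none => (row ++ [x]) :: rest
    | some k => (row.set k x) :: rowInsert rest (row.getD k 0)

/-- The insertion tableau `tab(w)` of a word `w`. -/
def tab (w : List ℕ) : List (List ℕ) := w.foldl rowInsert []

/-- The `RSK` correspondence: `RSK(M) = (tab(row(M)), tab(col(M)))`. -/
def RSKmap (M : Matrix (Fin m) (Fin n) ℕ) : List (List ℕ) × List (List ℕ) :=
  (tab (rowWord M), tab (colWord M))

/-- The column reading word of a tableau, with each letter labelled by its box `(row, col)`:
entries are read along columns bottom-to-top, left-to-right. -/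
def tabWordLbl (T : List (List ℕ)) : List (ℕ × (ℕ × ℕ)) :=
  (List.range (T.getD 0 []).length).flatMap fun j =>
    ((List.range T.length).reverse).filterMap fun r =>
      ((T.getD r [])[j]?).map fun x => (x, (r, j))

/-- The column reading word `word(T)` (columns bottom-to-top, left-to-right). -/
def tabWord (T : List (List ℕ)) : List ℕ := (tabWordLbl T).map Prod.fst

/-- Replace the entry of `T` in box `(r, j)` by `v`. -/
def setBox (T : List (List ℕ)) (r j v : ℕ) : List (List ℕ) :=
  T.set r ((T.getD r []).set j v)

/-- The tableau crystal lowering operator `f_i`: change the `i` of `T` corresponding to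
the rightmost unmatched `)` of `bracket_i(word(T))` into an `i + 1` (or `∅`). -/
def fTab (i : ℕ) (T : List (List ℕ)) : Option (List (List ℕ)) :=
  (lastUnmatched i (i + 1) (tabWordLbl T) 0).map fun p => setBox T p.1 p.2 (i + 1)

/-- The tableau crystal raising operator `e_i`: change the `i + 1` of `T` corresponding to
the leftmost unmatched `(` of `bracket_i(word(T))` into an `i` (or `∅`). -/
def eTab (i : ℕ) (T : List (List ℕ)) : Option (List (List ℕ)) :=
  (lastUnmatched (i + 1) i (tabWordLbl T).reverse 0).map fun p => setBox T p.1 p.2 i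

/-- `T` (a list of rows, top to bottom) is a semistandard Young tableau with positive
integer entries. -/
def IsSSYT (T : List (List ℕ)) : Prop :=
  (∀ r ∈ T, r ≠ []) ∧
  (∀ r ∈ T, List.Chain' (· ≤ ·) r) ∧
  (∀ i, (T.getD (i + 1) []).length ≤ (T.getD i []).length) ∧
  (∀ i j, j < (T.getD (i + 1) []).length →
    (T.getD i []).getD j 0 < (T.getD (i + 1) []).getD j 0) ∧
  (∀ r ∈ T, ∀ x ∈ r, 1 ≤ x)

/-- `w` is `[a,b]`-ballot: every initial segment contains at least as many `i`s as
`(i+1)`s, for each `i ∈ [a, b-1]`. -/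
def IsBallot (a b : ℕ) (w : List ℕ) : Prop :=
  ∀ k i, a ≤ i → i + 1 ≤ b → (w.take k).count (i + 1) ≤ (w.take k).count i

/-- `T` is an `[a,b]`-Littlewood–Richardson tableau: `revword(T)|_{[a,b]}` is
`[a,b]`-ballot. -/
def IsLRInterval (a b : ℕ) (T : List (List ℕ)) : Prop :=
  IsBallot a b (((tabWord T).reverse).filter fun x => decide (a ≤ x ∧ x ≤ b))

/-- `T` is `𝐊`-LR for `𝐊 = {0 = k_0 < ⋯ < k_t = ℓ}`: `T` is `[k_{α-1}+1, k_α]`-LR for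
every pair of consecutive elements of `𝐊`. -/
def IsKLR (K : Finset ℕ) (T : List (List ℕ)) : Prop :=
  ∀ a b, a ∈ K → b ∈ K → a < b → (∀ x ∈ K, ¬(a < x ∧ x < b)) → IsLRInterval (a + 1) b T

/-- The `[a,b]`-width of a word: the maximum length of a strictly decreasing subsequence
of the restriction `u|_{[a,b]}`. -/
noncomputable def widthInterval (a b : ℕ) (u : List ℕ) : ℕ :=
  sSup {d | ∃ s : List ℕ, s.Sublist (u.filter fun x => decide (a ≤ x ∧ x ≤ b)) ∧
    List.Chain' (· > ·) s ∧ s.length = d}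

/-- The entry of `T` in box `p = (row, col)`. -/
def tabEntry (T : List (List ℕ)) (p : ℕ × ℕ) : ℕ := (T.getD p.1 []).getD p.2 0

/-- The `[a,b]`-width of a tableau: the maximum length of an `[a,b]`-antidiagonal, i.e. a
sequence of boxes of `T` from distinct rows with entries in `[a,b]`, each box weakly east
and strictly north of the previous one, whose entries strictly decrease read bottom to
top. -/
noncomputable def tabWidth (a b : ℕ) (T : List (List ℕ)) : ℕ :=
  sSup {d | ∃ L : List (ℕ × ℕ),
    (∀ p ∈ L, p.1 < T.length ∧ p.2 < (T.getD p.1 []).length ∧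
      a ≤ tabEntry T p ∧ tabEntry T p ≤ b) ∧
    List.Chain' (fun p q => q.1 < p.1 ∧ p.2 ≤ q.2 ∧ tabEntry T q < tabEntry T p) L ∧
    L.length = d}

/-- The maximum length of a sequence of nonzero entries of `M` in antidiagonal position
(row indices strictly decreasing, column indices strictly increasing along the sequence)
with all (1-based) row indices in `[a,b]`. -/
noncomputable def rowAntidiagWidth (a b : ℕ) (M : Matrix (Fin m) (Fin n) ℕ) : ℕ :=
  sSup {d | ∃ L : List (Fin m × Fin n),
    (∀ p ∈ L, M p.1 p.2 ≠ 0 ∧ a ≤ p.1.1 + 1 ∧ p.1.1 + 1 ≤ b) ∧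
    List.Chain' (fun p q => q.1 < p.1 ∧ p.2 < q.2) L ∧
    L.length = d}

/-- As `rowAntidiagWidth`, but with all (1-based) column indices in `[a,b]`. -/
noncomputable def colAntidiagWidth (a b : ℕ) (M : Matrix (Fin m) (Fin n) ℕ) : ℕ :=
  sSup {d | ∃ L : List (Fin m × Fin n),
    (∀ p ∈ L, M p.1 p.2 ≠ 0 ∧ a ≤ p.2.1 + 1 ∧ p.2.1 + 1 ≤ b) ∧
    List.Chain' (fun p q => q.1 < p.1 ∧ p.2 < q.2) L ∧
    L.length = d}

/-- An elementary Knuth transformation: `prq ≡ rpq` for `p ≤ q < r`, and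
`qpr ≡ qrp` for `p < q ≤ r`. -/
inductive KnuthStep : List ℕ → List ℕ → Prop
  | swap1 (u v : List ℕ) (p q r : ℕ) (h1 : p ≤ q) (h2 : q < r) :
      KnuthStep (u ++ p :: r :: q :: v) (u ++ r :: p :: q :: v)
  | swap2 (u v : List ℕ) (p q r : ℕ) (h1 : p < q) (h2 : q ≤ r) :
      KnuthStep (u ++ q :: p :: r :: v) (u ++ q :: r :: p :: v)

/-- Knuth equivalence of words. -/
def KnuthEquiv : List ℕ → List ℕ → Prop := Relation.EqvGen KnuthStep

end GCS

/-!
Insertion tableaux classify words up to Knuth equivalence, and every tableau is the insertion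
tableau of its own reading word. The operator `f_i` on words is compatible with Knuth equivalence
and, read on the reading word of a tableau, is the tableau operator `f_i`; hence
`f_i (tab w) = tab (f_i w)`. As `f_i^row` acts on `row(M)` by the word operator, this settles the
first component of `RSK`.

For the second component, `col(M)` is the concatenation of the increasing words formed by the column
indices of the letters `1, 2, …, m` of `row(M)`, and `f_i^row` moves one column index `c` from the
`i`-th word to the next one. Bracket matching pairs the remaining column indices of the two words
so that rows of paired entries strictly decrease downwards, and inserting the second word into the
first shows that this move does not change the Knuth class of `col(M)`.

Raising operators invert lowering operators, and the column operators are the row operators of the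
transposed matrix, which exchanges the two components of `RSK`.
-/

namespace GCS

/-! ### Insertion into a single row -/

/-- Insertion of a letter into a single row: the new row together with the word of bumped
letters, which is empty or a single letter. -/
def rowBump : List ℕ → ℕ → List ℕ × List ℕ
  | [], x => ([x], [])
  | y :: R, x => if x < y then (x :: R, [y]) else (y :: (rowBump R x).1, (rowBump R x).2)

/-- Successive insertion of the letters of a word into a single row: the new row together with
the word of bumped letters, in the order in which they leave the row. -/
def rowBumpWord : List ℕ → List ℕ → List ℕ × List ℕ
  | R, [] => (R, [])
  | R, x :: w =>
    ((rowBumpWord (rowBump R x).1 w).1, (rowBump R x).2 ++ (rowBumpWord (rowBump R x).1 w).2)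

theorem findIdx?_match_eq_rowBump (R : List ℕ) (x : ℕ) :
    (match R.findIdx? (fun y => decide (x < y)) with
      | none => (R ++ [x], ([] : List ℕ))
      | some k => (R.set k x, [R.getD k 0])) = rowBump R x := by
  induction R with
  | nil => simp [rowBump]
  | cons y R ih =>
    rw [List.findIdx?_cons, rowBump]
    by_cases hxy : x < y
    · simp [hxy]
    · simp only [hxy, decide_false, Bool.false_eq_true, if_false]
      rw [← ih]
      cases R.findIdx? (fun y => decide (x < y)) <;> simp

theorem rowInsert_cons (R : List ℕ) (T : List (List ℕ)) (x : ℕ) :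
    rowInsert (R :: T) x = (rowBump R x).1 :: (rowBump R x).2.foldl rowInsert T := by
  rw [rowInsert, ← findIdx?_match_eq_rowBump]
  cases R.findIdx? (fun y => decide (x < y)) <;> simp

theorem foldl_rowInsert_cons (R : List ℕ) (T : List (List ℕ)) (w : List ℕ) :
    w.foldl rowInsert (R :: T) =
      (rowBumpWord R w).1 :: (rowBumpWord R w).2.foldl rowInsert T := by
  induction w generalizing R T with
  | nil => simp [rowBumpWord]
  | cons x w ih => simp [rowBumpWord, rowInsert_cons, ih]

theorem tab_eq_cons {w : List ℕ} (hw : w ≠ []) :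
    tab w = (rowBumpWord [] w).1 :: tab (rowBumpWord [] w).2 := by
  obtain ⟨x, w, rfl⟩ := List.exists_cons_of_ne_nil hw
  rw [tab, tab, ← foldl_rowInsert_cons]
  simp [rowInsert]

theorem rowBumpWord_append (R u v : List ℕ) :
    rowBumpWord R (u ++ v) =
      ((rowBumpWord (rowBumpWord R u).1 v).1,
        (rowBumpWord R u).2 ++ (rowBumpWord (rowBumpWord R u).1 v).2) := by
  induction u generalizing R with
  | nil => simp [rowBumpWord]
  | cons x u ih => simp [rowBumpWord, ih]

theorem rowBump_snd_eq_nil_or_singleton (R : List ℕ) (x : ℕ) :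
    (rowBump R x).2 = [] ∨ ∃ z, (rowBump R x).2 = [z] := by
  induction R with
  | nil => simp [rowBump]
  | cons y R ih =>
    rw [rowBump]
    split_ifs
    · simp
    · exact ih

theorem lt_and_mem_of_rowBump_snd_eq {R : List ℕ} {x z : ℕ} (h : (rowBump R x).2 = [z]) :
    x < z ∧ z ∈ R := by
  induction R with
  | nil => simp [rowBump] at h
  | cons y R ih =>
    rw [rowBump] at h
    split_ifs at h with hxy
    · obtain rfl : y = z := by simpa using h
      simp [hxy]
    · simp [ih h]

theorem eq_or_mem_of_mem_rowBump_fst {R : List ℕ} {x z : ℕ} (h : z ∈ (rowBump R x).1) :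
    z = x ∨ z ∈ R := by
  induction R with
  | nil => simpa [rowBump] using h
  | cons y R ih =>
    rw [rowBump] at h
    split_ifs at h with hxy <;> grind

theorem length_rowBump (R : List ℕ) (x : ℕ) :
    (rowBump R x).1.length + (rowBump R x).2.length = R.length + 1 := by
  induction R with
  | nil => simp [rowBump]
  | cons y R ih =>
    rw [rowBump]
    split_ifs <;> grind

theorem length_rowBumpWord (R w : List ℕ) :
    (rowBumpWord R w).1.length + (rowBumpWord R w).2.length = R.length + w.length := by
  induction w generalizing R with
  | nil => simp [rowBumpWord]
  | cons x w ih =>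
    have hx := length_rowBump R x
    have hw := ih (rowBump R x).1
    simp only [rowBumpWord, List.length_append, List.length_cons]
    omega

theorem rowBump_fst_ne_nil (R : List ℕ) (x : ℕ) : (rowBump R x).1 ≠ [] := by
  cases R with
  | nil => simp [rowBump]
  | cons y R => rw [rowBump]; split_ifs <;> simp

theorem rowBumpWord_fst_ne_nil {R : List ℕ} (hR : R ≠ []) (w : List ℕ) :
    (rowBumpWord R w).1 ≠ [] := by
  induction w generalizing R with
  | nil => exact hR
  | cons x _ ih => exact ih (rowBump_fst_ne_nil R x)

theorem rowBumpWord_nil_fst_ne_nil {w : List ℕ} (hw : w ≠ []) : (rowBumpWord [] w).1 ≠ [] := by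
  obtain ⟨x, w, rfl⟩ := List.exists_cons_of_ne_nil hw
  exact rowBumpWord_fst_ne_nil (rowBump_fst_ne_nil [] x) w

theorem length_rowBumpWord_nil_snd_lt {w : List ℕ} (hw : w ≠ []) :
    (rowBumpWord [] w).2.length < w.length := by
  have hlen := length_rowBumpWord [] w
  have hpos := List.length_pos_iff.2 (rowBumpWord_nil_fst_ne_nil hw)
  simp only [List.length_nil] at hlen
  omega

theorem pairwise_le_rowBump_fst {R : List ℕ} (hR : R.Pairwise (· ≤ ·)) (x : ℕ) :
    (rowBump R x).1.Pairwise (· ≤ ·) := by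
  induction R with
  | nil => simp [rowBump]
  | cons y R ih =>
    obtain ⟨hy, hR⟩ := List.pairwise_cons.1 hR
    rw [rowBump]
    split_ifs with hxy
    · exact List.pairwise_cons.2 ⟨fun a ha => hxy.le.trans (hy a ha), hR⟩
    · refine List.pairwise_cons.2 ⟨fun a ha => ?_, ih hR⟩
      rcases eq_or_mem_of_mem_rowBump_fst ha with rfl | ha
      · exact not_lt.1 hxy
      · exact hy a ha

theorem pairwise_le_rowBumpWord_fst {R : List ℕ} (hR : R.Pairwise (· ≤ ·)) (w : List ℕ) :
    (rowBumpWord R w).1.Pairwise (· ≤ ·) := by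
  induction w generalizing R with
  | nil => exact hR
  | cons x _ ih => exact ih (pairwise_le_rowBump_fst hR x)

theorem rowBump_snd_of_gt (R : List ℕ) {q r : ℕ} (h : q < r) :
    ∃ z, (rowBump (rowBump R r).1 q).2 = [z] ∧ z ≤ r := by
  induction R with
  | nil => simp [rowBump, h]
  | cons y R ih =>
    by_cases hry : r < y
    · simp [rowBump, hry, h]
    · by_cases hqy : q < y
      · simp [rowBump, hry, hqy, not_lt.1 hry]
      · simpa [rowBump, hry, hqy] using ih

theorem rowBump_snd_of_le {R : List ℕ} (hR : R.Pairwise (· ≤ ·)) {q r : ℕ} (h : q ≤ r) :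
    (rowBump (rowBump R q).1 r).2 = [] ∨ ∃ z z', (rowBump R q).2 = [z] ∧
      (rowBump (rowBump R q).1 r).2 = [z'] ∧ z ≤ z' := by
  induction R with
  | nil => simp [rowBump, h.not_gt]
  | cons y R ih =>
    obtain ⟨hy, hR⟩ := List.pairwise_cons.1 hR
    by_cases hqy : q < y
    · simp only [rowBump, hqy, if_true, h.not_gt, if_false]
      rcases rowBump_snd_eq_nil_or_singleton R r with hz | ⟨z, hz⟩
      · exact Or.inl hz
      · exact Or.inr ⟨y, z, rfl, hz, hy z (lt_and_mem_of_rowBump_snd_eq hz).2⟩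
    · have hry : ¬ r < y := by omega
      simpa [rowBump, hqy, hry] using ih hR

theorem rowBump_append_of_forall_le {R : List ℕ} {x : ℕ} (h : ∀ y ∈ R, y ≤ x) (S : List ℕ) :
    rowBump (R ++ S) x = (R ++ (rowBump S x).1, (rowBump S x).2) := by
  induction R with
  | nil => simp
  | cons y R ih =>
    have hxy : ¬ x < y := (h y (by simp)).not_gt
    simp [rowBump, hxy, ih fun z hz => h z (by simp [hz])]

/-! ### Knuth equivalence -/

/-- The two elementary Knuth relations on three-letter words, without surrounding context. -/
inductive KnuthTriple : List ℕ → List ℕ → Prop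
  | swapFront (p q r : ℕ) (hpq : p ≤ q) (hqr : q < r) : KnuthTriple [p, r, q] [r, p, q]
  | swapBack (p q r : ℕ) (hpq : p < q) (hqr : q ≤ r) : KnuthTriple [q, p, r] [q, r, p]

theorem knuthStep_iff {w w' : List ℕ} :
    KnuthStep w w' ↔
      ∃ u a b v, KnuthTriple a b ∧ w = u ++ (a ++ v) ∧ w' = u ++ (b ++ v) := by
  constructor
  · rintro (⟨u, v, p, q, r, hpq, hqr⟩ | ⟨u, v, p, q, r, hpq, hqr⟩)
    · exact ⟨u, _, _, v, .swapFront p q r hpq hqr, rfl, rfl⟩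
    · exact ⟨u, _, _, v, .swapBack p q r hpq hqr, rfl, rfl⟩
  · rintro ⟨u, a, b, v, h, rfl, rfl⟩
    cases h with
    | swapFront p q r hpq hqr => exact .swap1 u v p q r hpq hqr
    | swapBack p q r hpq hqr => exact .swap2 u v p q r hpq hqr

namespace KnuthEquiv

variable {w w' w'' : List ℕ}

@[refl]
theorem refl (w : List ℕ) : KnuthEquiv w w := Relation.EqvGen.refl w

@[symm]
theorem symm (h : KnuthEquiv w w') : KnuthEquiv w' w := Relation.EqvGen.symm _ _ h

@[trans]
theorem trans (h : KnuthEquiv w w') (h' : KnuthEquiv w' w'') : KnuthEquiv w w'' :=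
  Relation.EqvGen.trans _ _ _ h h'

theorem append_append (h : KnuthEquiv w w') (s t : List ℕ) :
    KnuthEquiv (s ++ (w ++ t)) (s ++ (w' ++ t)) := by
  induction h with
  | rel x y h =>
    obtain ⟨u, a, b, v, hab, rfl, rfl⟩ := knuthStep_iff.1 h
    exact .rel _ _ (knuthStep_iff.2 ⟨s ++ u, a, b, v ++ t, hab, by simp, by simp⟩)
  | refl x => exact refl _
  | symm x y _ ih => exact ih.symm
  | trans x y z _ _ ih ih' => exact ih.trans ih'

theorem append_left (h : KnuthEquiv w w') (s : List ℕ) : KnuthEquiv (s ++ w) (s ++ w') := by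
  simpa using h.append_append s []

theorem append_right (h : KnuthEquiv w w') (t : List ℕ) : KnuthEquiv (w ++ t) (w' ++ t) := by
  simpa using h.append_append [] t

theorem length_eq (h : KnuthEquiv w w') : w.length = w'.length := by
  induction h with
  | rel x y h =>
    obtain ⟨u, a, b, v, ⟨⟩ | ⟨⟩, rfl, rfl⟩ := knuthStep_iff.1 h <;> simp
  | refl x => rfl
  | symm x y _ ih => exact ih.symm
  | trans x y z _ _ ih ih' => exact ih.trans ih'

end KnuthEquiv

theorem KnuthTriple.knuthEquiv {a b : List ℕ} (h : KnuthTriple a b) : KnuthEquiv a b :=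
  .rel _ _ (knuthStep_iff.2 ⟨[], a, b, [], h, by simp, by simp⟩)

theorem rowBumpWord_swapFront {R : List ℕ} (hR : R.Pairwise (· ≤ ·)) {p q r : ℕ}
    (hpq : p ≤ q) (hqr : q < r) :
    (rowBumpWord R [p, r, q]).1 = (rowBumpWord R [r, p, q]).1 ∧
      KnuthEquiv (rowBumpWord R [p, r, q]).2 (rowBumpWord R [r, p, q]).2 := by
  have hrp : ¬ r < p := by omega
  have hqp : ¬ q < p := hpq.not_gt
  have hpr : p < r := by omega
  induction R with
  | nil => simp [rowBumpWord, rowBump, hrp, hqp, hpr, hqr, KnuthEquiv.refl]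
  | cons y R ih =>
    obtain ⟨hy, hR⟩ := List.pairwise_cons.1 hR
    rcases le_or_gt y p with hyp | hpy
    · have hry : ¬ r < y := by omega
      have hqy : ¬ q < y := by omega
      simpa [rowBumpWord, rowBump, hyp.not_gt, hry, hqy] using ih hR
    rcases lt_or_ge r y with hry | hyr
    · cases R with
      | nil => simp [rowBumpWord, rowBump, hpy, hry, hrp, hpr, hqp, hqr, KnuthEquiv.refl]
      | cons z R =>
        have hyz := hy z (by simp)
        have hrz : r < z := by omega
        have hqz : q < z := by omega
        simp only [rowBumpWord, rowBump, hpy, hry, hrp, hpr, hqp, hqr, hrz, hqz, if_true,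
          if_false, true_and]
        exact (KnuthTriple.swapBack r y z hry hyz).knuthEquiv.symm
    · simp only [rowBumpWord, rowBump, hpy, hyr.not_gt, hrp, hqp, if_true, if_false, true_and]
      obtain ⟨z, hz, hzr⟩ := rowBump_snd_of_gt R hqr
      have hyz : y ≤ z := by
        rcases eq_or_mem_of_mem_rowBump_fst (lt_and_mem_of_rowBump_snd_eq hz).2 with rfl | h
        · exact hyr
        · exact hy z h
      rw [hz]
      rcases rowBump_snd_eq_nil_or_singleton R r with hu | ⟨u, hu⟩ <;> rw [hu]
      · rfl
      · have hru := (lt_and_mem_of_rowBump_snd_eq hu).1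
        exact (KnuthTriple.swapFront y z u hyz (by omega)).knuthEquiv

theorem rowBumpWord_swapBack {R : List ℕ} (hR : R.Pairwise (· ≤ ·)) {p q r : ℕ}
    (hpq : p < q) (hqr : q ≤ r) :
    (rowBumpWord R [q, p, r]).1 = (rowBumpWord R [q, r, p]).1 ∧
      KnuthEquiv (rowBumpWord R [q, p, r]).2 (rowBumpWord R [q, r, p]).2 := by
  have hrp : ¬ r < p := by omega
  have hrq : ¬ r < q := hqr.not_gt
  induction R with
  | nil => simp [rowBumpWord, rowBump, hrp, hrq, hpq, KnuthEquiv.refl]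
  | cons y R ih =>
    obtain ⟨hy, hR⟩ := List.pairwise_cons.1 hR
    rcases le_or_gt y p with hyp | hpy
    · have hry : ¬ r < y := by omega
      have hqy : ¬ q < y := by omega
      simpa [rowBumpWord, rowBump, hyp.not_gt, hry, hqy] using ih hR
    rcases lt_or_ge q y with hqy | hyq
    · simp only [rowBumpWord, rowBump, hqy, hpq, hrp, hrq, if_true, if_false, true_and]
      rcases rowBump_snd_eq_nil_or_singleton R r with hu | ⟨u, hu⟩ <;> rw [hu]
      · rfl
      · have hyu := hy u (lt_and_mem_of_rowBump_snd_eq hu).2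
        exact (KnuthTriple.swapBack q y u hqy hyu).knuthEquiv
    · have hry : ¬ r < y := by omega
      simp only [rowBumpWord, rowBump, hpy, hyq.not_gt, hrp, hry, if_true, if_false, true_and]
      rcases rowBump_snd_of_le hR hqr with hz | ⟨z, z', hz, hz', hzz'⟩
      · simp [hz, KnuthEquiv.refl]
      · have hqz := (lt_and_mem_of_rowBump_snd_eq hz).1
        rw [hz, hz']
        exact (KnuthTriple.swapBack y z z' (by omega) hzz').knuthEquiv

theorem rowBumpWord_of_knuthEquiv {w w' : List ℕ} (h : KnuthEquiv w w') {R : List ℕ}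
    (hR : R.Pairwise (· ≤ ·)) :
    (rowBumpWord R w).1 = (rowBumpWord R w').1 ∧
      KnuthEquiv (rowBumpWord R w).2 (rowBumpWord R w').2 := by
  induction h with
  | rel x y h =>
    obtain ⟨u, a, b, v, hab, rfl, rfl⟩ := knuthStep_iff.1 h
    have hRu := pairwise_le_rowBumpWord_fst hR u
    have htriple : (rowBumpWord (rowBumpWord R u).1 a).1 = (rowBumpWord (rowBumpWord R u).1 b).1 ∧
        KnuthEquiv (rowBumpWord (rowBumpWord R u).1 a).2
          (rowBumpWord (rowBumpWord R u).1 b).2 := by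
      cases hab with
      | swapFront p q r hpq hqr => exact rowBumpWord_swapFront hRu hpq hqr
      | swapBack p q r hpq hqr => exact rowBumpWord_swapBack hRu hpq hqr
    simp only [rowBumpWord_append, htriple.1]
    exact ⟨trivial, htriple.2.append_append _ _⟩
  | refl x => exact ⟨rfl, .refl _⟩
  | symm x y _ ih => exact ⟨ih.1.symm, ih.2.symm⟩
  | trans x y z _ _ ih ih' => exact ⟨ih.1.trans ih'.1, ih.2.trans ih'.2⟩

theorem KnuthEquiv.tab_eq {w w' : List ℕ} (h : KnuthEquiv w w') : tab w = tab w' := by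
  induction hk : w.length using Nat.strong_induction_on generalizing w w' with
  | _ k ih =>
    subst hk
    rcases eq_or_ne w [] with rfl | hw
    · rw [List.eq_nil_of_length_eq_zero h.length_eq.symm]
    · have hw' : w' ≠ [] := by
        rwa [← List.length_pos_iff, ← h.length_eq, List.length_pos_iff]
      obtain ⟨hrow, hbumped⟩ := rowBumpWord_of_knuthEquiv h (R := []) .nil
      rw [tab_eq_cons hw, tab_eq_cons hw', hrow,
        ih _ (length_rowBumpWord_nil_snd_lt hw) hbumped rfl]

theorem knuthEquiv_append_singleton_of_lt {y : ℕ} {R : List ℕ} {x : ℕ}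
    (hR : (y :: R).Pairwise (· ≤ ·)) (hxy : x < y) :
    KnuthEquiv (y :: R ++ [x]) (y :: x :: R) := by
  induction R generalizing y with
  | nil => exact .refl _
  | cons z R ih =>
    obtain ⟨hy, hR⟩ := List.pairwise_cons.1 hR
    have hyz := hy z (by simp)
    have hmove := (ih hR (by omega)).append_left [y]
    have hswap := (KnuthTriple.swapBack x y z hxy hyz).knuthEquiv.append_right R
    exact hmove.trans hswap.symm

theorem rowBump_fst_eq_cons {y : ℕ} {R : List ℕ} {x u : ℕ} (hR : (y :: R).Pairwise (· ≤ ·))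
    (hyx : y ≤ x) (hu : (rowBump R x).2 = [u]) :
    ∃ a S, (rowBump R x).1 = a :: S ∧ y ≤ a ∧ a < u := by
  have hxu := (lt_and_mem_of_rowBump_snd_eq hu).1
  cases R with
  | nil => simp [rowBump] at hu
  | cons b R =>
    by_cases hxb : x < b
    · exact ⟨x, R, by simp [rowBump, hxb], hyx, hxu⟩
    · exact ⟨b, (rowBump R x).1, by simp only [rowBump, hxb, if_false],
        (List.pairwise_cons.1 hR).1 b (by simp), by omega⟩

theorem knuthEquiv_rowBump {R : List ℕ} (hR : R.Pairwise (· ≤ ·)) (x : ℕ) :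
    KnuthEquiv (R ++ [x]) ((rowBump R x).2 ++ (rowBump R x).1) := by
  induction R with
  | nil => exact .refl _
  | cons y R ih =>
    by_cases hxy : x < y
    · simpa [rowBump, hxy] using knuthEquiv_append_singleton_of_lt hR hxy
    · simp only [rowBump, hxy, if_false]
      have htail := (ih (List.pairwise_cons.1 hR).2).append_left [y]
      rcases rowBump_snd_eq_nil_or_singleton R x with hu | ⟨u, hu⟩
      · simpa [hu] using htail
      · obtain ⟨a, S, hS, hya, hau⟩ := rowBump_fst_eq_cons hR (not_lt.1 hxy) hu
        rw [hu, hS] at htail ⊢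
        have hswap := (KnuthTriple.swapFront y a u hya hau).knuthEquiv.append_right S
        exact htail.trans hswap

theorem knuthEquiv_rowBumpWord {R : List ℕ} (hR : R.Pairwise (· ≤ ·)) (w : List ℕ) :
    KnuthEquiv (R ++ w) ((rowBumpWord R w).2 ++ (rowBumpWord R w).1) := by
  induction w generalizing R with
  | nil => simpa [rowBumpWord] using .refl R
  | cons x w ih =>
    have hx : KnuthEquiv (R ++ x :: w) ((rowBump R x).2 ++ ((rowBump R x).1 ++ w)) := by
      simpa using (knuthEquiv_rowBump hR x).append_right w
    have hw := (ih (pairwise_le_rowBump_fst hR x)).append_left (rowBump R x).2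
    simpa [rowBumpWord] using hx.trans hw

/-! ### Semistandard tableaux -/

/-- The row `S` may be placed below the row `R` of a semistandard tableau: `S` is no longer than
`R`, and each entry of `S` exceeds the entry of `R` above it. -/
def ColumnLT (R S : List ℕ) : Prop :=
  ∀ j y : ℕ, S[j]? = some y → ∃ x, R[j]? = some x ∧ x < y

instance : IsTrans (List ℕ) ColumnLT where
  trans _ _ _ hRS hST j z hz := by
    obtain ⟨y, hy, hyz⟩ := hST j z hz
    obtain ⟨x, hx, hxy⟩ := hRS j y hy
    exact ⟨x, hx, hxy.trans hyz⟩

theorem columnLT_nil (R : List ℕ) : ColumnLT R [] := by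
  simp [ColumnLT]

theorem not_columnLT_nil_cons (s : ℕ) (S : List ℕ) : ¬ ColumnLT [] (s :: S) := by
  intro h
  obtain ⟨x, hx, _⟩ := h 0 s (by simp)
  simp at hx

theorem columnLT_cons_cons {r s : ℕ} {R S : List ℕ} :
    ColumnLT (r :: R) (s :: S) ↔ r < s ∧ ColumnLT R S := by
  refine ⟨fun h => ⟨by simpa using h 0 s rfl, fun j y hy => by simpa using h (j + 1) y hy⟩, ?_⟩
  rintro ⟨hrs, hRS⟩ (_ | j) y hy
  · obtain rfl : s = y := by simpa using hy
    exact ⟨r, rfl, hrs⟩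
  · simpa using hRS j y (by simpa using hy)

theorem ColumnLT.length_le {R S : List ℕ} (h : ColumnLT R S) : S.length ≤ R.length := by
  by_contra! hlt
  obtain ⟨x, hx, _⟩ := h R.length S[R.length] (by simp)
  simp at hx

/-- Semistandard tableaux, as lists of rows, with entries in `ℕ` (the entry `0` is allowed). -/
structure IsSemistandard (T : List (List ℕ)) : Prop where
  ne_nil : ∀ R ∈ T, R ≠ []
  pairwise_le : ∀ R ∈ T, R.Pairwise (· ≤ ·)
  pairwise_columnLT : T.Pairwise ColumnLT

theorem isSemistandard_nil : IsSemistandard [] := ⟨by simp, by simp, .nil⟩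

theorem IsSemistandard.tail {R : List ℕ} {T : List (List ℕ)} (h : IsSemistandard (R :: T)) :
    IsSemistandard T where
  ne_nil S hS := h.ne_nil S (by simp [hS])
  pairwise_le S hS := h.pairwise_le S (by simp [hS])
  pairwise_columnLT := (List.pairwise_cons.1 h.pairwise_columnLT).2

theorem ColumnLT.rowBump_left {R S : List ℕ} (h : ColumnLT R S) (x : ℕ) :
    ColumnLT (rowBump R x).1 S := by
  induction R generalizing S with
  | nil =>
    cases S with
    | nil => exact columnLT_nil _
    | cons s S => exact absurd h (not_columnLT_nil_cons s S)
  | cons r R ih =>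
    cases S with
    | nil => exact columnLT_nil _
    | cons s S =>
      obtain ⟨hrs, hRS⟩ := columnLT_cons_cons.1 h
      rw [rowBump]
      split_ifs with hxr
      · exact columnLT_cons_cons.2 ⟨hxr.trans hrs, hRS⟩
      · exact columnLT_cons_cons.2 ⟨hrs, ih hRS⟩

theorem ColumnLT.rowBump_rowBump {R S : List ℕ} (h : ColumnLT R S) {x u : ℕ}
    (hu : (rowBump R x).2 = [u]) : ColumnLT (rowBump R x).1 (rowBump S u).1 := by
  induction R generalizing S with
  | nil => simp [rowBump] at hu
  | cons r R ih =>
    by_cases hxr : x < r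
    · obtain rfl : u = r := by simpa [rowBump, hxr] using hu.symm
      cases S with
      | nil => simp [rowBump, hxr, columnLT_cons_cons, columnLT_nil]
      | cons s S =>
        obtain ⟨hus, hRS⟩ := columnLT_cons_cons.1 h
        simp [rowBump, hxr, columnLT_cons_cons, hus, hRS]
    · have hu' : (rowBump R x).2 = [u] := by simpa [rowBump, hxr] using hu
      have hru : r < u := (not_lt.1 hxr).trans_lt (lt_and_mem_of_rowBump_snd_eq hu').1
      cases S with
      | nil => simp [rowBump, hxr, columnLT_cons_cons, columnLT_nil, hru]
      | cons s S =>
        obtain ⟨hrs, hRS⟩ := columnLT_cons_cons.1 h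
        by_cases hus : u < s
        · simpa [rowBump, hxr, hus, columnLT_cons_cons, hru] using hRS.rowBump_left x
        · simpa [rowBump, hxr, hus, columnLT_cons_cons, hrs] using ih hRS hu'

theorem ColumnLT.rowBumpWord_rowBumpWord {R S : List ℕ} (h : ColumnLT R S) (w : List ℕ) :
    ColumnLT (rowBumpWord R w).1 (rowBumpWord S (rowBumpWord R w).2).1 := by
  induction w generalizing R S with
  | nil => exact h
  | cons x w ih =>
    simp only [rowBumpWord]
    rcases rowBump_snd_eq_nil_or_singleton R x with hu | ⟨u, hu⟩
    · simpa [hu] using ih (h.rowBump_left x)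
    · simpa [hu, rowBumpWord] using ih (h.rowBump_rowBump hu)

theorem IsSemistandard.cons {R S : List ℕ} {T : List (List ℕ)} (h : IsSemistandard (S :: T))
    (hne : R ≠ []) (hle : R.Pairwise (· ≤ ·)) (hRS : ColumnLT R S) :
    IsSemistandard (R :: S :: T) where
  ne_nil := List.forall_mem_cons.2 ⟨hne, h.ne_nil⟩
  pairwise_le := List.forall_mem_cons.2 ⟨hle, h.pairwise_le⟩
  pairwise_columnLT := by
    rw [← List.isChain_iff_pairwise, List.isChain_cons_cons, List.isChain_iff_pairwise]
    exact ⟨hRS, h.pairwise_columnLT⟩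

theorem isSemistandard_tab (w : List ℕ) : IsSemistandard (tab w) := by
  induction hk : w.length using Nat.strong_induction_on generalizing w with
  | _ k ih =>
    subst hk
    rcases eq_or_ne w [] with rfl | hw
    · exact isSemistandard_nil
    have hne := rowBumpWord_nil_fst_ne_nil hw
    have hle : (rowBumpWord [] w).1.Pairwise (· ≤ ·) := pairwise_le_rowBumpWord_fst .nil w
    have hbumped := ih _ (length_rowBumpWord_nil_snd_lt hw) _ rfl
    rw [tab_eq_cons hw]
    rcases eq_or_ne (rowBumpWord [] w).2 [] with hnil | hb
    · rw [hnil]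
      exact ⟨by simpa [tab] using hne, by simpa [tab] using hle, by simp [tab]⟩
    · rw [tab_eq_cons hb] at hbumped ⊢
      exact hbumped.cons hne hle ((columnLT_nil []).rowBumpWord_rowBumpWord w)

/-- The `k`-th column of a tableau, from top to bottom. -/
def column (T : List (List ℕ)) (k : ℕ) : List ℕ := T.filterMap (·[k]?)

/-- The column reading word of the first `k` columns of a tableau. -/
def columnsWord (T : List (List ℕ)) (k : ℕ) : List ℕ :=
  (List.range k).flatMap fun j => (column T j).reverse

theorem tabWord_eq_columnsWord (T : List (List ℕ)) :
    tabWord T = columnsWord T (T.getD 0 []).length := by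
  have hrows : (List.range T.length).map (T.getD · []) = T :=
    List.ext_getElem (by simp) (by simp +contextual)
  rw [tabWord, tabWordLbl, columnsWord, List.map_flatMap]
  congr 1
  funext j
  rw [List.map_filterMap, column, List.filterMap_reverse]
  congr 1
  conv_rhs => rw [← hrows, List.filterMap_map]
  simp [Option.map_map, Function.comp_def]

theorem column_eq_nil {T : List (List ℕ)} {k : ℕ} (h : ∀ R ∈ T, R.length ≤ k) :
    column T k = [] :=
  List.filterMap_eq_nil_iff.2 fun R hR => List.getElem?_eq_none (h R hR)

theorem columnsWord_succ (T : List (List ℕ)) (k : ℕ) :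
    columnsWord T (k + 1) = columnsWord T k ++ (column T k).reverse := by
  simp [columnsWord, List.range_succ]

theorem columnsWord_eq_of_le {T : List (List ℕ)} {k l : ℕ} (h : ∀ R ∈ T, R.length ≤ k)
    (hkl : k ≤ l) : columnsWord T l = columnsWord T k := by
  induction l, hkl using Nat.le_induction with
  | base => rfl
  | succ l hkl ih =>
    rw [columnsWord_succ, ih, column_eq_nil fun R hR => (h R hR).trans hkl]
    simp

namespace IsSemistandard

variable {R : List ℕ} {T : List (List ℕ)}

theorem length_le (h : IsSemistandard (R :: T)) : ∀ S ∈ R :: T, S.length ≤ R.length :=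
  List.forall_mem_cons.2
    ⟨le_rfl, fun S hS => ((List.pairwise_cons.1 h.pairwise_columnLT).1 S hS).length_le⟩

theorem columnsWord_eq_tabWord (h : IsSemistandard (R :: T)) :
    columnsWord T R.length = tabWord T := by
  rw [tabWord_eq_columnsWord]
  cases T with
  | nil => exact columnsWord_eq_of_le (by simp) (by simp)
  | cons S T => exact columnsWord_eq_of_le h.tail.length_le (h.length_le S (by simp))

theorem pairwise_lt_column (h : IsSemistandard T) (k : ℕ) : (column T k).Pairwise (· < ·) := by
  rw [column, List.pairwise_filterMap]
  refine h.pairwise_columnLT.imp fun {R S} hRS x hx y hy => ?_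
  obtain ⟨x', hx', hlt⟩ := hRS k y hy
  obtain rfl : x = x' := Option.some_injective _ (hx.symm.trans hx')
  exact hlt

end IsSemistandard

-- Inserting a decreasing word whose last letter fits at the end of the row: each letter bumps
-- its predecessor from the new last box.
theorem rowBumpWord_column {R cs : List ℕ} {c : ℕ} (hR : ∀ x ∈ R, x ≤ c)
    (hc : (c :: cs).Pairwise (· < ·)) :
    rowBumpWord R (cs.reverse ++ [c]) = (R ++ [c], cs.reverse) := by
  induction cs generalizing c with
  | nil => simpa [rowBumpWord, rowBump] using rowBump_append_of_forall_le hR []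
  | cons d ds ih =>
    obtain ⟨hlt, hds⟩ := List.pairwise_cons.1 hc
    have hcd := hlt d (by simp)
    rw [rowBumpWord_append, List.reverse_cons, ih (fun x hx => (hR x hx).trans hcd.le) hds]
    simp [rowBumpWord, rowBump_append_of_forall_le hR [d], rowBump, hcd]

theorem IsSemistandard.rowBumpWord_columnsWord {R : List ℕ} {T : List (List ℕ)}
    (h : IsSemistandard (R :: T)) {k : ℕ} (hk : k ≤ R.length) :
    rowBumpWord [] (columnsWord (R :: T) k) = (R.take k, columnsWord T k) := by
  induction k with
  | zero => simp [columnsWord, rowBumpWord]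
  | succ k ih =>
    have hcol : column (R :: T) k = R[k] :: column T k := by
      simp [column, List.getElem?_eq_getElem hk]
    have hlt := h.pairwise_lt_column k
    have hle : ∀ x ∈ R.take k, x ≤ R[k] := by
      intro x hx
      obtain ⟨a, ha, rfl⟩ := List.mem_take_iff_getElem.1 hx
      exact List.pairwise_iff_getElem.1 (h.pairwise_le R (by simp)) a k _ _ (by omega)
    rw [hcol] at hlt
    rw [columnsWord_succ, rowBumpWord_append, ih (by omega), hcol, List.reverse_cons,
      rowBumpWord_column hle hlt, columnsWord_succ, List.take_succ_eq_append_getElem hk]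

theorem IsSemistandard.rowBumpWord_tabWord {R : List ℕ} {T : List (List ℕ)}
    (h : IsSemistandard (R :: T)) : rowBumpWord [] (tabWord (R :: T)) = (R, tabWord T) := by
  rw [tabWord_eq_columnsWord, List.getD_cons_zero, h.rowBumpWord_columnsWord le_rfl,
    List.take_length, h.columnsWord_eq_tabWord]

theorem IsSemistandard.tabWord_ne_nil {R : List ℕ} {T : List (List ℕ)}
    (h : IsSemistandard (R :: T)) : tabWord (R :: T) ≠ [] := by
  intro hnil
  have hrow := h.rowBumpWord_tabWord
  rw [hnil] at hrow
  exact h.ne_nil R (by simp) (congrArg Prod.fst hrow).symm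

theorem IsSemistandard.tab_tabWord {T : List (List ℕ)} (h : IsSemistandard T) :
    tab (tabWord T) = T := by
  induction T with
  | nil => rfl
  | cons R T ih => rw [tab_eq_cons h.tabWord_ne_nil, h.rowBumpWord_tabWord, ih h.tail]

theorem knuthEquiv_tabWord_tab (w : List ℕ) : KnuthEquiv w (tabWord (tab w)) := by
  induction hk : w.length using Nat.strong_induction_on generalizing w with
  | _ k ih =>
    subst hk
    rcases eq_or_ne w [] with rfl | hw
    · exact .refl _
    have hword := knuthEquiv_rowBumpWord (R := []) .nil w
    have hbumped := ih _ (length_rowBumpWord_nil_snd_lt hw) _ rfl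
    have htab := knuthEquiv_rowBumpWord (R := []) .nil (tabWord (tab w))
    have hss := isSemistandard_tab w
    rw [tab_eq_cons hw] at hss htab ⊢
    rw [hss.rowBumpWord_tabWord] at htab
    exact hword.trans ((hbumped.append_right _).trans htab.symm)

/-! ### Brackets and the word operators -/

/-- The numbers of unmatched closing and of unmatched opening brackets of a word, where the letter
`cl` is read as `)` and the letter `op` as `(`. -/
def unmatched (cl op : ℕ) : List ℕ → ℕ × ℕ
  | [] => (0, 0)
  | x :: w =>
    if x = cl then ((unmatched cl op w).1 + 1, (unmatched cl op w).2)
    else if x = op then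
      ((unmatched cl op w).1 - 1, (unmatched cl op w).2 + (1 - (unmatched cl op w).1))
    else unmatched cl op w

section Unmatched

variable {cl op : ℕ}

theorem unmatched_append (u v : List ℕ) :
    unmatched cl op (u ++ v) =
      ((unmatched cl op u).1 + ((unmatched cl op v).1 - (unmatched cl op u).2),
        (unmatched cl op v).2 + ((unmatched cl op u).2 - (unmatched cl op v).1)) := by
  induction u with
  | nil => simp [unmatched]
  | cons x u ih =>
    simp only [List.cons_append, unmatched, ih]
    split_ifs <;> ext <;> grind

theorem unmatched_reverse (h : cl ≠ op) (w : List ℕ) :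
    unmatched op cl w.reverse = (unmatched cl op w).swap := by
  induction w with
  | nil => rfl
  | cons x w ih =>
    rw [List.reverse_cons, unmatched_append, ih]
    ext <;> grind [unmatched]

theorem mem_of_unmatched_snd_ne_zero {w : List ℕ} (h : (unmatched cl op w).2 ≠ 0) : op ∈ w := by
  induction w with
  | nil => simp [unmatched] at h
  | cons x w ih => grind [unmatched]

theorem unmatched_fst_add_count (h : cl ≠ op) (w : List ℕ) :
    (unmatched cl op w).1 + w.count op = (unmatched cl op w).2 + w.count cl := by
  induction w with
  | nil => rfl
  | cons x w ih => grind [unmatched]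

variable {β : Type}

theorem exists_open_of_close_mem {r : ℕ × β → ℕ × β → Prop} {L : List (ℕ × β)}
    (hr : L.Pairwise r) (hL : (unmatched cl op (L.map Prod.fst)).1 = 0) {l : β}
    (hl : (cl, l) ∈ L) : ∃ l', (op, l') ∈ L ∧ r (op, l') (cl, l) := by
  obtain ⟨A, B, rfl⟩ := List.append_of_mem hl
  have hA : op ∈ A.map Prod.fst := by
    refine mem_of_unmatched_snd_ne_zero (cl := cl) fun hA => ?_
    simp [unmatched_append, unmatched, hA] at hL
  obtain ⟨⟨_, l'⟩, hl', rfl⟩ := List.mem_map.1 hA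
  exact ⟨l', by simp [hl'], (List.pairwise_append.1 hr).2.2 _ hl' _ (by simp)⟩

theorem exists_close_of_open_mem (h : cl ≠ op) {r : ℕ × β → ℕ × β → Prop} {L : List (ℕ × β)}
    (hr : L.Pairwise r) (hL : (unmatched cl op (L.map Prod.fst)).2 = 0) {l : β}
    (hl : (op, l) ∈ L) : ∃ l', (cl, l') ∈ L ∧ r (op, l) (cl, l') := by
  have hL' : (unmatched op cl (L.reverse.map Prod.fst)).1 = 0 := by
    rwa [List.map_reverse, unmatched_reverse h]
  simpa using exists_open_of_close_mem (List.pairwise_reverse.2 hr) hL' (by simpa using hl)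

theorem lastUnmatched_eq_none_iff {L : List (ℕ × β)} {o : ℕ} :
    lastUnmatched cl op L o = none ↔ (unmatched cl op (L.map Prod.fst)).1 ≤ o := by
  induction L generalizing o with
  | nil => simp [lastUnmatched, unmatched]
  | cons x L ih =>
    obtain ⟨a, l⟩ := x
    simp only [lastUnmatched, List.map_cons, unmatched]
    split_ifs with hcl ho hop
    · subst ho
      cases lastUnmatched cl op L 0 <;> simp
    all_goals grind

theorem exists_split_of_lastUnmatched_eq_some {L : List (ℕ × β)} {o : ℕ} {l : β}
    (h : lastUnmatched cl op L o = some l) :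
    ∃ A B, L = A ++ (cl, l) :: B ∧ (unmatched cl op (A.map Prod.fst)).2 = 0 ∧
      (unmatched cl op (B.map Prod.fst)).1 = 0 ∧ o ≤ (unmatched cl op (A.map Prod.fst)).1 := by
  induction L generalizing o with
  | nil => simp [lastUnmatched] at h
  | cons x L ih =>
    obtain ⟨a, l'⟩ := x
    simp only [lastUnmatched] at h
    split_ifs at h with hcl ho hop
    · subst hcl ho
      cases hl : lastUnmatched a op L 0 with
      | none =>
        obtain rfl : l' = l := by simpa [hl] using h
        exact ⟨[], L, rfl, rfl, Nat.le_zero.1 (lastUnmatched_eq_none_iff.1 hl), Nat.zero_le _⟩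
      | some l₀ =>
        obtain rfl : l₀ = l := by simpa [hl] using h
        obtain ⟨A, B, rfl, hA, hB, -⟩ := ih hl
        exact ⟨(a, l') :: A, B, rfl, by simpa [unmatched] using hA, hB, Nat.zero_le _⟩
    all_goals
      obtain ⟨A, B, rfl, hA, hB, ho⟩ := ih h
      refine ⟨(a, l') :: A, B, rfl, ?_, hB, ?_⟩ <;> simp only [List.map_cons, unmatched] <;> grind

theorem lastUnmatched_append_cons {A B : List (ℕ × β)} {l : β} {o : ℕ}
    (hA : (unmatched cl op (A.map Prod.fst)).2 = 0)
    (hB : (unmatched cl op (B.map Prod.fst)).1 = 0)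
    (ho : o ≤ (unmatched cl op (A.map Prod.fst)).1) :
    lastUnmatched cl op (A ++ (cl, l) :: B) o = some l := by
  induction A generalizing o with
  | nil =>
    obtain rfl : o = 0 := by simpa [unmatched] using ho
    simp [lastUnmatched, lastUnmatched_eq_none_iff.2 hB.le]
  | cons x A ih =>
    obtain ⟨a, l'⟩ := x
    simp only [List.map_cons, unmatched] at hA ho
    simp only [List.cons_append, lastUnmatched]
    grind

theorem lastUnmatched_eq_some_iff {L : List (ℕ × β)} {l : β} :
    lastUnmatched cl op L 0 = some l ↔
      ∃ A B, L = A ++ (cl, l) :: B ∧ (unmatched cl op (A.map Prod.fst)).2 = 0 ∧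
        (unmatched cl op (B.map Prod.fst)).1 = 0 := by
  constructor
  · intro h
    obtain ⟨A, B, hL, hA, hB, -⟩ := exists_split_of_lastUnmatched_eq_some h
    exact ⟨A, B, hL, hA, hB⟩
  · rintro ⟨A, B, rfl, hA, hB⟩
    exact lastUnmatched_append_cons hA hB (Nat.zero_le _)

theorem lastUnmatched_reverse_eq_none_iff (h : cl ≠ op) {L : List (ℕ × β)} :
    lastUnmatched op cl L.reverse 0 = none ↔ (unmatched cl op (L.map Prod.fst)).2 = 0 := by
  rw [lastUnmatched_eq_none_iff, List.map_reverse, unmatched_reverse h, Prod.fst_swap,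
    Nat.le_zero]

theorem lastUnmatched_reverse_eq_some_iff (h : cl ≠ op) {L : List (ℕ × β)} {l : β} :
    lastUnmatched op cl L.reverse 0 = some l ↔
      ∃ A B, L = A ++ (op, l) :: B ∧ (unmatched cl op (A.map Prod.fst)).2 = 0 ∧
        (unmatched cl op (B.map Prod.fst)).1 = 0 := by
  rw [lastUnmatched_eq_some_iff]
  constructor
  · rintro ⟨A, B, hL, hA, hB⟩
    refine ⟨B.reverse, A.reverse, by simpa using congrArg List.reverse hL, ?_, ?_⟩ <;>
      simpa [unmatched_reverse h.symm]
  · rintro ⟨A, B, rfl, hA, hB⟩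
    refine ⟨B.reverse, A.reverse, by simp, ?_, ?_⟩ <;> simpa [unmatched_reverse h]

end Unmatched

/-- The crystal lowering operator `f_i` on words, defined letter by letter: the first letter is
the one to be changed when every closing bracket to its right is matched. -/
def fWord (i : ℕ) : List ℕ → Option (List ℕ)
  | [] => none
  | x :: w =>
    if (unmatched i (i + 1) [x]).2 < (unmatched i (i + 1) w).1 then (fWord i w).map (x :: ·)
    else if x = i then some ((i + 1) :: w) else none

theorem fWord_eq_none_iff {i : ℕ} {w : List ℕ} :
    fWord i w = none ↔ (unmatched i (i + 1) w).1 = 0 := by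
  induction w with
  | nil => simp [fWord, unmatched]
  | cons x w ih =>
    cases hw : fWord i w <;> grind [fWord, unmatched]

theorem fWord_append (i : ℕ) (u v : List ℕ) :
    fWord i (u ++ v) =
      if (unmatched i (i + 1) u).2 < (unmatched i (i + 1) v).1 then (fWord i v).map (u ++ ·)
      else (fWord i u).map (· ++ v) := by
  induction u with
  | nil =>
    rcases Nat.eq_zero_or_pos (unmatched i (i + 1) v).1 with hv | hv
    · simpa [fWord, unmatched, hv] using fWord_eq_none_iff.2 hv
    · simp [unmatched, hv]
  | cons x u ih =>
    simp only [List.cons_append, fWord, unmatched_append, ih, unmatched]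
    cases fWord i u <;> cases fWord i v <;> grind

theorem fWord_append_cons {i : ℕ} {A B : List ℕ} (hA : (unmatched i (i + 1) A).2 = 0)
    (hB : (unmatched i (i + 1) B).1 = 0) : fWord i (A ++ i :: B) = some (A ++ (i + 1) :: B) := by
  simp [fWord_append, fWord, unmatched, hA, hB]

theorem KnuthTriple.unmatched_eq {a b : List ℕ} (h : KnuthTriple a b) (i : ℕ) :
    unmatched i (i + 1) a = unmatched i (i + 1) b := by
  cases h <;> grind [unmatched]

theorem rel_fWord_swapFront {p q r : ℕ} (hpq : p ≤ q) (hqr : q < r) (i : ℕ) :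
    Option.Rel KnuthEquiv (fWord i [p, r, q]) (fWord i [r, p, q]) := by
  by_cases hiir : p = i ∧ q = i ∧ r = i + 1
  · obtain ⟨rfl, rfl, rfl⟩ := hiir
    simpa [fWord, unmatched] using
      (KnuthTriple.swapBack q (q + 1) (q + 1) (by omega) le_rfl).knuthEquiv.symm
  obtain ⟨h, h'⟩ | ⟨hlt, h, h'⟩ | ⟨hlt, h, h'⟩ | ⟨h, h'⟩ :
      fWord i [p, r, q] = none ∧ fWord i [r, p, q] = none ∨
      p + 1 ≤ q ∧ fWord i [p, r, q] = some [p + 1, r, q] ∧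
        fWord i [r, p, q] = some [r, p + 1, q] ∨
      q + 1 < r ∧ fWord i [p, r, q] = some [p, r, q + 1] ∧
        fWord i [r, p, q] = some [r, p, q + 1] ∨
      fWord i [p, r, q] = some [p, r + 1, q] ∧ fWord i [r, p, q] = some [r + 1, p, q] := by
    by_cases hp : p = i <;> by_cases hq : q = i <;> by_cases hr : r = i <;>
      by_cases hp' : p = i + 1 <;> by_cases hq' : q = i + 1 <;> by_cases hr' : r = i + 1 <;>
      grind [fWord, unmatched]
  all_goals rw [h, h']
  · exact .none
  · exact .some (KnuthTriple.swapFront _ _ _ hlt hqr).knuthEquiv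
  · exact .some (KnuthTriple.swapFront _ _ _ (by omega) hlt).knuthEquiv
  · exact .some (KnuthTriple.swapFront _ _ _ hpq (by omega)).knuthEquiv

theorem rel_fWord_swapBack {p q r : ℕ} (hpq : p < q) (hqr : q ≤ r) (i : ℕ) :
    Option.Rel KnuthEquiv (fWord i [q, p, r]) (fWord i [q, r, p]) := by
  obtain ⟨h, h'⟩ | ⟨hlt, h, h'⟩ | ⟨hle, h, h'⟩ | ⟨h, h'⟩ :
      fWord i [q, p, r] = none ∧ fWord i [q, r, p] = none ∨
      p + 1 < q ∧ fWord i [q, p, r] = some [q, p + 1, r] ∧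
        fWord i [q, r, p] = some [q, r, p + 1] ∨
      q + 1 ≤ r ∧ fWord i [q, p, r] = some [q + 1, p, r] ∧
        fWord i [q, r, p] = some [q + 1, r, p] ∨
      fWord i [q, p, r] = some [q, p, r + 1] ∧ fWord i [q, r, p] = some [q, r + 1, p] := by
    by_cases hp : p = i <;> by_cases hq : q = i <;> by_cases hr : r = i <;>
      by_cases hp' : p = i + 1 <;> by_cases hq' : q = i + 1 <;> by_cases hr' : r = i + 1 <;>
      grind [fWord, unmatched]
  all_goals rw [h, h']
  · exact .none
  · exact .some (KnuthTriple.swapBack _ _ _ hlt hqr).knuthEquiv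
  · exact .some (KnuthTriple.swapBack _ _ _ (by omega) hle).knuthEquiv
  · exact .some (KnuthTriple.swapBack _ _ _ hpq (by omega)).knuthEquiv

theorem KnuthTriple.rel_fWord {a b : List ℕ} (h : KnuthTriple a b) (i : ℕ) :
    Option.Rel KnuthEquiv (fWord i a) (fWord i b) := by
  cases h with
  | swapFront p q r hpq hqr => exact rel_fWord_swapFront hpq hqr i
  | swapBack p q r hpq hqr => exact rel_fWord_swapBack hpq hqr i

theorem KnuthEquiv.unmatched_eq {w w' : List ℕ} (h : KnuthEquiv w w') (i : ℕ) :
    unmatched i (i + 1) w = unmatched i (i + 1) w' := by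
  induction h with
  | rel x y h =>
    obtain ⟨u, a, b, v, hab, rfl, rfl⟩ := knuthStep_iff.1 h
    simp only [unmatched_append, hab.unmatched_eq i]
  | refl x => rfl
  | symm x y _ ih => exact ih.symm
  | trans x y z _ _ ih ih' => exact ih.trans ih'

theorem KnuthTriple.map_tab_fWord {a b : List ℕ} (h : KnuthTriple a b) (i : ℕ) (u v : List ℕ) :
    (fWord i (u ++ (a ++ v))).map tab = (fWord i (u ++ (b ++ v))).map tab := by
  have htab (u' v' : List ℕ) {s t : List ℕ} (hst : KnuthEquiv s t) :
      tab (u' ++ (s ++ v')) = tab (u' ++ (t ++ v')) := (hst.append_append u' v').tab_eq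
  simp only [fWord_append, unmatched_append, h.unmatched_eq i]
  have hrel := h.rel_fWord i
  generalize fWord i a = a', fWord i b = b' at hrel ⊢
  split_ifs
  · simp [Function.comp_def, htab _ _ h.knuthEquiv]
  · cases hrel with
    | none => rfl
    | some hab => simp [htab _ _ hab]
  · simp [Function.comp_def, htab _ _ h.knuthEquiv]

theorem KnuthEquiv.map_tab_fWord {w w' : List ℕ} (h : KnuthEquiv w w') (i : ℕ) :
    (fWord i w).map tab = (fWord i w').map tab := by
  induction h with
  | rel x y h =>
    obtain ⟨u, a, b, v, hab, rfl, rfl⟩ := knuthStep_iff.1 h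
    exact hab.map_tab_fWord i u v
  | refl x => rfl
  | symm x y _ ih => exact ih.symm
  | trans x y z _ _ ih ih' => exact ih.trans ih'

/-! ### Tableau operators -/

/-- The entry of a tableau in row `r` and column `j` (both 0-based), if that box exists. -/
def entryAt (T : List (List ℕ)) (r j : ℕ) : Option ℕ := (T.getD r [])[j]?

theorem entryAt_eq_some_iff {T : List (List ℕ)} {r j x : ℕ} :
    entryAt T r j = some x ↔ ∃ (hr : r < T.length) (hj : j < T[r].length), T[r][j] = x := by
  rw [entryAt]
  by_cases hr : r < T.length
  · simp [hr, List.getElem?_eq_some_iff]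
  · simp [hr]

theorem entryAt_getElem {T : List (List ℕ)} {r j : ℕ} (hr : r < T.length)
    (hj : j < T[r].length) : entryAt T r j = some T[r][j] :=
  entryAt_eq_some_iff.2 ⟨hr, hj, rfl⟩

theorem columnLT_getElem_iff {T : List (List ℕ)} {r s : ℕ} (hr : r < T.length)
    (hs : s < T.length) :
    ColumnLT T[r] T[s] ↔
      ∀ j y, entryAt T s j = some y → ∃ x, entryAt T r j = some x ∧ x < y := by
  simp [ColumnLT, entryAt, hr, hs]

namespace IsSemistandard

variable {T : List (List ℕ)}

theorem entryAt_le_right (h : IsSemistandard T) {r j k y : ℕ} (hjk : j ≤ k)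
    (hy : entryAt T r k = some y) : ∃ x, entryAt T r j = some x ∧ x ≤ y := by
  obtain ⟨hr, hk, rfl⟩ := entryAt_eq_some_iff.1 hy
  exact ⟨_, entryAt_getElem hr (hjk.trans_lt hk),
    (h.pairwise_le _ (List.getElem_mem hr)).rel_get_of_le (a := ⟨j, hjk.trans_lt hk⟩)
      (b := ⟨k, hk⟩) hjk⟩

theorem entryAt_lt_below (h : IsSemistandard T) {r s j y : ℕ} (hrs : r < s)
    (hy : entryAt T s j = some y) : ∃ x, entryAt T r j = some x ∧ x < y := by
  obtain ⟨hs, -⟩ := entryAt_eq_some_iff.1 hy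
  exact (columnLT_getElem_iff (hrs.trans hs) hs).1
    (List.pairwise_iff_getElem.1 h.pairwise_columnLT r s _ hs hrs) j y hy

theorem entryAt_le (h : IsSemistandard T) {r s j k y : ℕ} (hrs : r ≤ s) (hjk : j ≤ k)
    (hy : entryAt T s k = some y) : ∃ x, entryAt T r j = some x ∧ x ≤ y := by
  obtain ⟨x, hx, hxy⟩ := h.entryAt_le_right hjk hy
  rcases hrs.eq_or_lt with rfl | hrs
  · exact ⟨x, hx, hxy⟩
  · obtain ⟨x', hx', hlt⟩ := h.entryAt_lt_below hrs hx
    exact ⟨x', hx', hlt.le.trans hxy⟩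

theorem of_entryAt (hne : ∀ r < T.length, ∃ x, entryAt T r 0 = some x)
    (hrow : ∀ r j k x y, j < k → entryAt T r j = some x → entryAt T r k = some y → x ≤ y)
    (hcol : ∀ r s j y, r < s → entryAt T s j = some y → ∃ x, entryAt T r j = some x ∧ x < y) :
    IsSemistandard T where
  ne_nil R hR := by
    obtain ⟨r, hr, rfl⟩ := List.getElem_of_mem hR
    obtain ⟨x, hx⟩ := hne r hr
    obtain ⟨_, hpos, _⟩ := entryAt_eq_some_iff.1 hx
    exact List.ne_nil_of_length_pos hpos
  pairwise_le R hR := by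
    obtain ⟨r, hr, rfl⟩ := List.getElem_of_mem hR
    exact List.pairwise_iff_getElem.2 fun j k hj hk hjk =>
      hrow r j k _ _ hjk (entryAt_getElem hr hj) (entryAt_getElem hr hk)
  pairwise_columnLT := List.pairwise_iff_getElem.2 fun r s hr hs hrs =>
    (columnLT_getElem_iff hr hs).2 fun j y hy => hcol r s j y hrs hy

end IsSemistandard

theorem entryAt_setBox {T : List (List ℕ)} {r j x : ℕ} (h : entryAt T r j = some x)
    (v s l : ℕ) :
    entryAt (setBox T r j v) s l = if s = r ∧ l = j then some v else entryAt T s l := by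
  obtain ⟨hr, hj, -⟩ := entryAt_eq_some_iff.1 h
  rcases eq_or_ne s r with rfl | hs
  · rcases eq_or_ne l j with rfl | hl
    · simp [entryAt, setBox, hr, hj]
    · simp [entryAt, setBox, hr, hl, hl.symm]
  · simp [entryAt, setBox, hs, hs.symm]

theorem IsSemistandard.setBox_of_le {T : List (List ℕ)} (hT : IsSemistandard T) {r j x v : ℕ}
    (hx : entryAt T r j = some x) (hxv : x ≤ v)
    (hright : ∀ k y, j < k → entryAt T r k = some y → v ≤ y)
    (hbelow : ∀ s y, r < s → entryAt T s j = some y → v < y) :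
    IsSemistandard (setBox T r j v) := by
  have hentry := entryAt_setBox hx v
  refine .of_entryAt (fun s hs => ?_) (fun s k l y z hkl hy hz => ?_)
    fun s t k z hst hz => ?_
  · have hs' : s < T.length := by simpa [setBox] using hs
    have hpos := List.length_pos_iff.2 (hT.ne_nil _ (List.getElem_mem hs'))
    grind [entryAt_getElem hs' hpos]
  · rw [hentry] at hy hz
    split_ifs at hz with hbox
    · grind [hT.entryAt_le_right hkl.le (hbox.1 ▸ hbox.2 ▸ hx)]
    · grind [hT.entryAt_le_right hkl.le hz]
  · rw [hentry] at hz ⊢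
    split_ifs at hz with hbox
    · grind [hT.entryAt_lt_below (hbox.1 ▸ hst) hx]
    · grind [hT.entryAt_lt_below hst hz]

/-- The order in which the column reading word visits the boxes `(row, column)` of a tableau. -/
def BoxBefore (p q : ℕ × ℕ) : Prop := p.2 < q.2 ∨ p.2 = q.2 ∧ q.1 < p.1

theorem pairwise_boxBefore_tabWordLbl (T : List (List ℕ)) :
    (tabWordLbl T).Pairwise fun a b => BoxBefore a.2 b.2 := by
  rw [tabWordLbl, List.pairwise_flatMap]
  refine ⟨fun j _ => ?_, List.pairwise_lt_range.imp fun {j k} hjk a ha b hb => ?_⟩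
  · rw [List.pairwise_filterMap, List.pairwise_reverse]
    refine List.pairwise_lt_range.imp fun {r s} hrs a ha b hb => ?_
    obtain ⟨_, -, rfl⟩ := Option.map_eq_some_iff.1 ha
    obtain ⟨_, -, rfl⟩ := Option.map_eq_some_iff.1 hb
    exact Or.inr ⟨rfl, hrs⟩
  · simp only [List.mem_filterMap, Option.map_eq_some_iff] at ha hb
    obtain ⟨_, _, _, _, rfl⟩ := ha
    obtain ⟨_, _, _, _, rfl⟩ := hb
    exact Or.inl hjk

theorem IsSemistandard.mem_tabWordLbl_iff {T : List (List ℕ)} (h : IsSemistandard T)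
    {x r j : ℕ} : (x, (r, j)) ∈ tabWordLbl T ↔ entryAt T r j = some x := by
  simp only [tabWordLbl, List.mem_flatMap, List.mem_range, List.mem_filterMap,
    List.mem_reverse, Option.map_eq_some_iff, Prod.mk.injEq]
  constructor
  · rintro ⟨_, _, _, _, _, hx, rfl, rfl, rfl⟩
    exact hx
  · intro hx
    obtain ⟨hr, -⟩ := entryAt_eq_some_iff.1 hx
    obtain ⟨y, hy, -⟩ := h.entryAt_le r.zero_le le_rfl hx
    exact ⟨j, (List.getElem?_eq_some_iff.1 hy).1, r, hr, x, hx, rfl, rfl, rfl⟩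

theorem tabWordLbl_setBox {T : List (List ℕ)} {p : ℕ × ℕ} {x : ℕ}
    (h : entryAt T p.1 p.2 = some x) (v : ℕ) :
    tabWordLbl (setBox T p.1 p.2 v) =
      (tabWordLbl T).map fun a => if a.2 = p then (v, a.2) else a := by
  have hlength : (setBox T p.1 p.2 v).length = T.length := by simp [setBox]
  have hwidth : ((setBox T p.1 p.2 v).getD 0 []).length = (T.getD 0 []).length := by
    simp only [setBox]
    cases T <;> cases p.1 <;> simp
  rw [tabWordLbl, tabWordLbl, hlength, hwidth, List.map_flatMap]
  congr with j : 1
  rw [List.map_filterMap]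
  congr with r : 1
  change (entryAt (setBox T p.1 p.2 v) r j).map _ = ((entryAt T r j).map _).map _
  rw [entryAt_setBox h]
  by_cases hbox : r = p.1 ∧ j = p.2
  · obtain ⟨rfl, rfl⟩ := hbox
    simp [h]
  · have hne : (r, j) ≠ p := by rintro rfl; exact hbox ⟨rfl, rfl⟩
    simp [hbox, Function.comp_def, hne]

theorem tabWordLbl_setBox_of_eq_append {T : List (List ℕ)} (hT : IsSemistandard T)
    {A B : List (ℕ × (ℕ × ℕ))} {x : ℕ} {p : ℕ × ℕ} (h : tabWordLbl T = A ++ (x, p) :: B)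
    (v : ℕ) : tabWordLbl (setBox T p.1 p.2 v) = A ++ (v, p) :: B := by
  have hx : entryAt T p.1 p.2 = some x := hT.mem_tabWordLbl_iff.1 (by simp [h])
  have hsorted := pairwise_boxBefore_tabWordLbl T
  rw [h, List.pairwise_append, List.pairwise_cons] at hsorted
  have hirrefl (q : ℕ × ℕ) : ¬ BoxBefore q q := by simp [BoxBefore]
  have hfix {L : List (ℕ × (ℕ × ℕ))} (hL : ∀ a ∈ L, a.2 ≠ p) :
      L.map (fun a => if a.2 = p then (v, a.2) else a) = L :=
    (List.map_congr_left fun a ha => if_neg (hL a ha)).trans L.map_id'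
  rw [tabWordLbl_setBox hx, h, List.map_append, List.map_cons, if_pos rfl, hfix, hfix]
  · rintro a ha rfl
    exact hirrefl _ (hsorted.2.1.1 a ha)
  · rintro a ha rfl
    exact hirrefl _ (hsorted.2.2 a ha (x, a.2) List.mem_cons_self)

/-- The labelled word `L'` arises from `L` by lowering the letter `i` that is the rightmost
unmatched closing bracket; equivalently, `L` arises from `L'` by raising the letter `i + 1` that is
the leftmost unmatched opening bracket. -/
def IsLowering {β : Type} (i : ℕ) (L L' : List (ℕ × β)) : Prop :=
  ∃ A B l, L = A ++ (i, l) :: B ∧ L' = A ++ (i + 1, l) :: B ∧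
    (unmatched i (i + 1) (A.map Prod.fst)).2 = 0 ∧ (unmatched i (i + 1) (B.map Prod.fst)).1 = 0

theorem IsLowering.fWord_eq {β : Type} {i : ℕ} {L L' : List (ℕ × β)} (h : IsLowering i L L') :
    fWord i (L.map Prod.fst) = some (L'.map Prod.fst) := by
  obtain ⟨A, B, l, rfl, rfl, hA, hB⟩ := h
  simpa using fWord_append_cons hA hB

section LoweringTableau

variable {T S : List (List ℕ)} {i : ℕ}

theorem fTab_eq_none_iff : fTab i T = none ↔ (unmatched i (i + 1) (tabWord T)).1 = 0 := by
  rw [fTab, Option.map_eq_none_iff, lastUnmatched_eq_none_iff, Nat.le_zero, tabWord]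

theorem eTab_eq_none_iff : eTab i T = none ↔ (unmatched i (i + 1) (tabWord T)).2 = 0 := by
  rw [eTab, Option.map_eq_none_iff, lastUnmatched_reverse_eq_none_iff (by omega), tabWord]

theorem fTab_eq_some_iff :
    fTab i T = some S ↔ ∃ A B p, tabWordLbl T = A ++ (i, p) :: B ∧
      (unmatched i (i + 1) (A.map Prod.fst)).2 = 0 ∧
      (unmatched i (i + 1) (B.map Prod.fst)).1 = 0 ∧ setBox T p.1 p.2 (i + 1) = S := by
  simp only [fTab, Option.map_eq_some_iff, lastUnmatched_eq_some_iff]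
  grind

theorem IsSemistandard.isLowering_of_fTab_eq_some (hT : IsSemistandard T)
    (h : fTab i T = some S) : IsLowering i (tabWordLbl T) (tabWordLbl S) := by
  obtain ⟨A, B, p, hAB, hA, hB, rfl⟩ := fTab_eq_some_iff.1 h
  exact ⟨A, B, p, hAB, tabWordLbl_setBox_of_eq_append hT hAB _, hA, hB⟩

theorem IsSemistandard.eTab_eq_some_of_fTab_eq_some (hT : IsSemistandard T)
    (h : fTab i T = some S) : eTab i S = some T := by
  obtain ⟨A, B, p, hAB, hA, hB, rfl⟩ := fTab_eq_some_iff.1 h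
  have hi : entryAt T p.1 p.2 = some i := hT.mem_tabWordLbl_iff.1 (by simp [hAB])
  obtain ⟨hr, hj, hget⟩ := entryAt_eq_some_iff.1 hi
  have hundo : setBox (setBox T p.1 p.2 (i + 1)) p.1 p.2 i = T := by
    simp [setBox, hr, ← hget]
  rw [eTab, (lastUnmatched_reverse_eq_some_iff (by omega)).2
    ⟨A, B, tabWordLbl_setBox_of_eq_append hT hAB _, hA, hB⟩, Option.map_some, hundo]

-- A matching `i` for an `i + 1` below the box would be read between them, hence lie in the same
-- column strictly between them.
theorem IsSemistandard.entryAt_below_ne (hT : IsSemistandard T) {A B : List (ℕ × (ℕ × ℕ))}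
    {r j : ℕ} (h : tabWordLbl T = A ++ (i, (r, j)) :: B)
    (hA : (unmatched i (i + 1) (A.map Prod.fst)).2 = 0) {s : ℕ} (hrs : r < s) :
    entryAt T s j ≠ some (i + 1) := by
  intro hs
  have hr : entryAt T r j = some i := hT.mem_tabWordLbl_iff.1 (by simp [h])
  have hsorted := pairwise_boxBefore_tabWordLbl T
  have hmem := hT.mem_tabWordLbl_iff.2 hs
  rw [h, List.pairwise_append, List.pairwise_cons] at hsorted
  have hsA : (i + 1, (s, j)) ∈ A := by
    grind [BoxBefore]
  obtain ⟨⟨t, l⟩, htA, hst⟩ := exists_close_of_open_mem (by omega) hsorted.1 hA hsA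
  have htr := hsorted.2.2 _ htA _ List.mem_cons_self
  obtain ⟨rfl, hrt⟩ : l = j ∧ r < t := by grind [BoxBefore]
  have ht : entryAt T t l = some i := hT.mem_tabWordLbl_iff.1 (by simp [h, htA])
  grind [hT.entryAt_lt_below hrt ht]

theorem IsSemistandard.entryAt_right_ne (hT : IsSemistandard T) {A B : List (ℕ × (ℕ × ℕ))}
    {r j : ℕ} (h : tabWordLbl T = A ++ (i, (r, j)) :: B)
    (hA : (unmatched i (i + 1) (A.map Prod.fst)).2 = 0)
    (hB : (unmatched i (i + 1) (B.map Prod.fst)).1 = 0) {k : ℕ} (hjk : j < k) :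
    entryAt T r k ≠ some i := by
  intro hk
  have hr : entryAt T r j = some i := hT.mem_tabWordLbl_iff.1 (by simp [h])
  have hsorted := pairwise_boxBefore_tabWordLbl T
  have hmem := hT.mem_tabWordLbl_iff.2 hk
  rw [h, List.pairwise_append, List.pairwise_cons] at hsorted
  have hbefore (a) (ha : a ∈ A) := hsorted.2.2 a ha _ List.mem_cons_self
  have hkB : (i, (r, k)) ∈ B := by
    grind [BoxBefore]
  obtain ⟨⟨s, l⟩, hsB, hsk⟩ := exists_open_of_close_mem hsorted.2.1.2 hB hkB
  have hrs := hsorted.2.1.1 _ hsB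
  have hs : entryAt T s l = some (i + 1) := hT.mem_tabWordLbl_iff.1 (by simp [h, hsB])
  rcases lt_or_ge r s with hlt | hle
  · obtain ⟨x, hx, hxi⟩ := hT.entryAt_le_right (j := j) (by grind [BoxBefore]) hs
    obtain ⟨y, hy, hyx⟩ := hT.entryAt_lt_below hlt hx
    have hbelow := hT.entryAt_below_ne h hA hlt
    grind
  · obtain ⟨x, hx, hxi⟩ := hT.entryAt_le hle (k := k) (j := l) (by grind [BoxBefore]) hk
    grind

theorem IsSemistandard.of_fTab_eq_some (hT : IsSemistandard T) (h : fTab i T = some S) :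
    IsSemistandard S := by
  obtain ⟨A, B, ⟨r, j⟩, hAB, hA, hB, rfl⟩ := fTab_eq_some_iff.1 h
  have hi : entryAt T r j = some i := hT.mem_tabWordLbl_iff.1 (by simp [hAB])
  refine hT.setBox_of_le hi i.le_succ (fun k y hjk hy => ?_) fun s y hrs hy => ?_
  · have hne := hT.entryAt_right_ne hAB hA hB hjk
    grind [hT.entryAt_le_right hjk.le hy]
  · have hne := hT.entryAt_below_ne hAB hA hrs
    grind [hT.entryAt_lt_below hrs hy]

end LoweringTableau

theorem fTab_tab (i : ℕ) (w : List ℕ) : fTab i (tab w) = (fWord i w).map tab := by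
  have hT := isSemistandard_tab w
  rw [(knuthEquiv_tabWord_tab w).map_tab_fWord i]
  cases h : fTab i (tab w) with
  | none => rw [fWord_eq_none_iff.2 (fTab_eq_none_iff.1 h), Option.map_none]
  | some S =>
    have hS : fWord i (tabWord (tab w)) = some (tabWord S) :=
      (hT.isLowering_of_fTab_eq_some h).fWord_eq
    rw [hS, Option.map_some, (hT.of_fTab_eq_some h).tab_tabWord]

theorem eTab_tab_of_fWord_eq_some {i : ℕ} {w w' : List ℕ} (h : fWord i w = some w') :
    eTab i (tab w') = some (tab w) :=
  (isSemistandard_tab w).eTab_eq_some_of_fTab_eq_some (by rw [fTab_tab, h, Option.map_some])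

theorem eTab_tab_eq_none_iff {i : ℕ} {w : List ℕ} :
    eTab i (tab w) = none ↔ (unmatched i (i + 1) w).2 = 0 := by
  rw [eTab_eq_none_iff, (knuthEquiv_tabWord_tab w).unmatched_eq i]

/-! ### Matrix operators -/

variable {m n : ℕ}

/-- The weak order in which the row word visits the labelled letters `(row, column)`. -/
def ReadBefore (a b : ℕ × Fin n) : Prop := a.2 < b.2 ∨ a.2 = b.2 ∧ a.1 ≤ b.1

theorem pairwise_readBefore_rowWordLbl (M : Matrix (Fin m) (Fin n) ℕ) :
    (rowWordLbl M).Pairwise ReadBefore := by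
  rw [rowWordLbl, List.pairwise_flatMap]
  refine ⟨fun c _ => ?_, (List.pairwise_lt_finRange n).imp fun {c d} hcd a ha b hb => ?_⟩
  · rw [List.pairwise_flatMap]
    refine ⟨fun r _ => ?_, (List.pairwise_lt_finRange m).imp fun {r s} hrs a ha b hb => ?_⟩
    · exact List.pairwise_replicate.2 (Or.inr (Or.inr ⟨rfl, le_rfl⟩))
    · rw [List.eq_of_mem_replicate ha, List.eq_of_mem_replicate hb]
      exact Or.inr ⟨rfl, Nat.succ_le_succ (Fin.le_def.1 hrs.le)⟩
  · simp only [List.mem_flatMap, List.mem_replicate] at ha hb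
    obtain ⟨_, _, _, rfl⟩ := ha
    obtain ⟨_, _, _, rfl⟩ := hb
    exact Or.inl hcd

theorem count_rowWordLbl (M : Matrix (Fin m) (Fin n) ℕ) (x : ℕ) (c : Fin n) :
    (rowWordLbl M).count (x, c) = entRow M x c := by
  have hcount : (rowWordLbl M).count (x, c) =
      ∑ r : Fin m, if r.1 + 1 = x then M r c else 0 := by
    simp only [rowWordLbl, List.count_flatMap, Function.comp_def, ← Fin.sum_univ_def,
      List.count_replicate, beq_iff_eq, Prod.mk.injEq, ite_and]
    rw [Finset.sum_comm]
    simp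
  rw [hcount, entRow]
  split_ifs with hx
  · rw [Finset.sum_eq_single ⟨x - 1, by omega⟩] <;> grind
  · exact Finset.sum_eq_zero fun r _ => if_neg (by omega)

theorem rowWordLbl_eq_of_count {N : Matrix (Fin m) (Fin n) ℕ} {L : List (ℕ × Fin n)}
    (hsorted : L.Pairwise ReadBefore) (hcount : ∀ x c, L.count (x, c) = entRow N x c) :
    rowWordLbl N = L := by
  refine List.Perm.eq_of_pairwise (le := ReadBefore) ?_ (pairwise_readBefore_rowWordLbl N) hsorted
    (List.perm_iff_count.2 fun ⟨x, c⟩ => by rw [hcount, count_rowWordLbl])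
  rintro ⟨x, c⟩ ⟨y, d⟩ _ _ hab hba
  simp only [ReadBefore] at hab hba
  ext <;> grind

/-- Subtract one from the entry in row `x` and add one to the entry in row `y` of column `c`,
with 1-based row indices; truncated subtraction leaves a zero entry unchanged. -/
def moveEntry (x y : ℕ) (c : Fin n) (M : Matrix (Fin m) (Fin n) ℕ) :
    Matrix (Fin m) (Fin n) ℕ :=
  Matrix.of fun a b =>
    if a.1 + 1 = x ∧ b = c then M a b - 1
    else if a.1 + 1 = y ∧ b = c then M a b + 1
    else M a b

theorem frow_eq_map_moveEntry (i : ℕ) (M : Matrix (Fin m) (Fin n) ℕ) :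
    frow i M = (lastUnmatched i (i + 1) (rowWordLbl M) 0).map (moveEntry i (i + 1) · M) := rfl

theorem erow_eq_map_moveEntry (i : ℕ) (M : Matrix (Fin m) (Fin n) ℕ) :
    erow i M =
      (lastUnmatched (i + 1) i (rowWordLbl M).reverse 0).map (moveEntry (i + 1) i · M) := rfl

theorem entRow_moveEntry {x y : ℕ} (hy : 1 ≤ y) (hym : y ≤ m) (c : Fin n)
    (M : Matrix (Fin m) (Fin n) ℕ) (z : ℕ) (d : Fin n) :
    entRow (moveEntry x y c M) z d =
      if z = x ∧ d = c then entRow M z d - 1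
      else if z = y ∧ d = c then entRow M z d + 1
      else entRow M z d := by
  by_cases hz : 1 ≤ z ∧ z ≤ m
  · simp [entRow, moveEntry, hz, Nat.sub_add_cancel hz.1]
  · grind [entRow]

theorem rowWordLbl_moveEntry {M : Matrix (Fin m) (Fin n) ℕ} {A B : List (ℕ × Fin n)} {x y : ℕ}
    {c : Fin n} (hxy : x ≠ y) (hy : 1 ≤ y) (hym : y ≤ m) (h : rowWordLbl M = A ++ (x, c) :: B)
    (hsorted : (A ++ (y, c) :: B).Pairwise ReadBefore) :
    rowWordLbl (moveEntry x y c M) = A ++ (y, c) :: B := by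
  refine rowWordLbl_eq_of_count hsorted fun z d => ?_
  rw [entRow_moveEntry hy hym, ← count_rowWordLbl M, h]
  simp only [List.count_append, List.count_cons, beq_iff_eq, Prod.mk.injEq]
  grind

theorem pairwise_readBefore_lower {A B : List (ℕ × Fin n)} {i : ℕ} {c : Fin n}
    (h : (A ++ (i, c) :: B).Pairwise ReadBefore)
    (hB : (unmatched i (i + 1) (B.map Prod.fst)).1 = 0) :
    (A ++ (i + 1, c) :: B).Pairwise ReadBefore := by
  simp only [List.pairwise_append, List.pairwise_cons, List.forall_mem_cons] at h ⊢
  obtain ⟨hA, ⟨hcB, hB'⟩, hAB⟩ := h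
  have hnot : (i, c) ∉ B := fun hc => by
    obtain ⟨l, hl, hlc⟩ := exists_open_of_close_mem hB' hB hc
    grind [ReadBefore]
  exact ⟨hA, ⟨by grind [ReadBefore], hB'⟩, by grind [ReadBefore]⟩

theorem pairwise_readBefore_raise {A B : List (ℕ × Fin n)} {i : ℕ} {c : Fin n}
    (h : (A ++ (i + 1, c) :: B).Pairwise ReadBefore)
    (hA : (unmatched i (i + 1) (A.map Prod.fst)).2 = 0) :
    (A ++ (i, c) :: B).Pairwise ReadBefore := by
  simp only [List.pairwise_append, List.pairwise_cons, List.forall_mem_cons] at h ⊢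
  obtain ⟨hA', ⟨hcB, hB⟩, hAB⟩ := h
  have hnot : (i + 1, c) ∉ A := fun hc => by
    obtain ⟨l, hl, hlc⟩ := exists_close_of_open_mem (by omega) hA' hA hc
    grind [ReadBefore]
  exact ⟨hA', ⟨by grind [ReadBefore], hB⟩, by grind [ReadBefore]⟩

section RowOperators

variable {M N : Matrix (Fin m) (Fin n) ℕ} {i : ℕ}

theorem isLowering_of_frow_eq_some (him : i < m) (h : frow i M = some N) :
    IsLowering i (rowWordLbl M) (rowWordLbl N) := by
  rw [frow_eq_map_moveEntry, Option.map_eq_some_iff] at h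
  obtain ⟨c, hc, rfl⟩ := h
  obtain ⟨A, B, hAB, hA, hB⟩ := lastUnmatched_eq_some_iff.1 hc
  have hsorted := pairwise_readBefore_lower (hAB ▸ pairwise_readBefore_rowWordLbl M) hB
  exact ⟨A, B, c, hAB, rowWordLbl_moveEntry (by omega) (by omega) him hAB hsorted, hA, hB⟩

theorem isLowering_of_erow_eq_some (hi : 1 ≤ i) (him : i < m) (h : erow i M = some N) :
    IsLowering i (rowWordLbl N) (rowWordLbl M) := by
  rw [erow_eq_map_moveEntry, Option.map_eq_some_iff] at h
  obtain ⟨c, hc, rfl⟩ := h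
  obtain ⟨A, B, hAB, hA, hB⟩ := (lastUnmatched_reverse_eq_some_iff (by omega)).1 hc
  have hsorted := pairwise_readBefore_raise (hAB ▸ pairwise_readBefore_rowWordLbl M) hA
  exact ⟨A, B, c, rowWordLbl_moveEntry (by omega) hi him.le hAB hsorted, hAB, hA, hB⟩

theorem frow_eq_none_iff : frow i M = none ↔ (unmatched i (i + 1) (rowWord M)).1 = 0 := by
  rw [frow, Option.map_eq_none_iff, lastUnmatched_eq_none_iff, Nat.le_zero, rowWord]

theorem erow_eq_none_iff : erow i M = none ↔ (unmatched i (i + 1) (rowWord M)).2 = 0 := by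
  rw [erow, Option.map_eq_none_iff, lastUnmatched_reverse_eq_none_iff (by omega), rowWord]

end RowOperators

/-! ### Invariance of the column word -/

theorem exists_rowBump_append_cons (R : List ℕ) {x y : ℕ} (h : x < y) :
    ∃ R' z, ∀ S, rowBump (R ++ y :: S) x = (R' ++ S, z) := by
  induction R with
  | nil => exact ⟨[x], [y], fun S => by simp [rowBump, h]⟩
  | cons t R ih =>
    obtain ⟨R', z, hR'⟩ := ih
    by_cases hxt : x < t
    · exact ⟨x :: (R ++ [y]), [t], fun S => by simp [rowBump, hxt]⟩
    · exact ⟨t :: R', z, fun S => by simp [rowBump, hxt, hR']⟩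

-- Every letter of `u` bumps within the prefix `R ++ v`, so the tail `S` is never reached.
theorem exists_rowBumpWord_append {u v : List ℕ} (h : List.Forall₂ (· < ·) u v) (R : List ℕ) :
    ∃ R' z, ∀ S, rowBumpWord (R ++ v ++ S) u = (R' ++ S, z) := by
  induction h generalizing R with
  | nil => exact ⟨R, [], fun S => by simp [rowBumpWord]⟩
  | @cons x y u v hxy _ ih =>
    obtain ⟨R₁, z₁, h₁⟩ := exists_rowBump_append_cons R hxy
    obtain ⟨R₂, z₂, h₂⟩ := ih R₁
    refine ⟨R₂, z₁ ++ z₂, fun S => ?_⟩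
    have hx : rowBump (R ++ y :: v ++ S) x = (R₁ ++ v ++ S, z₁) := by simpa using h₁ (v ++ S)
    simp only [rowBumpWord, hx, h₂]

theorem rowBumpWord_eq_append {R w : List ℕ} (h : (R ++ w).Pairwise (· ≤ ·)) :
    rowBumpWord R w = (R ++ w, []) := by
  induction w generalizing R with
  | nil => simp [rowBumpWord]
  | cons x w ih =>
    have hle : ∀ y ∈ R, y ≤ x := fun y hy => (List.pairwise_append.1 h).2.2 y hy x (by simp)
    have hx : rowBump R x = (R ++ [x], []) := by
      simpa [rowBump] using rowBump_append_of_forall_le hle []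
    simp [rowBumpWord, hx, ih (R := R ++ [x]) (by simpa using h)]

theorem rowBumpWord_append_of_forall₂_lt {u v : List ℕ} (h : List.Forall₂ (· < ·) u v)
    {R w : List ℕ} (hsorted : (R ++ (u ++ w)).Pairwise (· ≤ ·)) :
    rowBumpWord (R ++ v) (u ++ w) = (R ++ (u ++ w), v) := by
  induction h generalizing R with
  | nil => simpa using rowBumpWord_eq_append (by simpa using hsorted)
  | @cons x y u v hxy _ ih =>
    have hle : ∀ z ∈ R, z ≤ x := fun z hz => (List.pairwise_append.1 hsorted).2.2 z hz x (by simp)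
    have hx : rowBump (R ++ y :: v) x = (R ++ [x] ++ v, [y]) := by
      simpa [rowBump, hxy] using rowBump_append_of_forall_le hle (y :: v)
    have hu := ih (R := R ++ [x]) (by simpa using hsorted)
    simp only [List.cons_append, rowBumpWord, hx, hu]
    simp

-- Inserting `u₁` only affects `R ++ v₁`, and inserting `u₂ ++ w` into `c :: v₂` bumps exactly `v₂`.
theorem knuthEquiv_move_between_rows {R v₁ v₂ u₁ u₂ w : List ℕ} {c : ℕ}
    (h₁ : List.Forall₂ (· < ·) u₁ v₁) (h₂ : List.Forall₂ (· < ·) u₂ v₂)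
    (hupper : (R ++ v₁ ++ c :: v₂).Pairwise (· ≤ ·))
    (hlower : (c :: (u₂ ++ w)).Pairwise (· ≤ ·)) :
    KnuthEquiv (R ++ v₁ ++ c :: v₂ ++ (u₁ ++ (u₂ ++ w)))
      (R ++ v₁ ++ v₂ ++ (u₁ ++ c :: (u₂ ++ w))) := by
  obtain ⟨R', z, hR'⟩ := exists_rowBumpWord_append h₁ R
  have hwith : KnuthEquiv (R ++ v₁ ++ c :: v₂ ++ u₁) (z ++ (R' ++ c :: v₂)) := by
    simpa only [hR'] using knuthEquiv_rowBumpWord hupper u₁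
  have hwithout : KnuthEquiv (R ++ v₁ ++ v₂ ++ u₁) (z ++ (R' ++ v₂)) := by
    simpa only [hR'] using knuthEquiv_rowBumpWord
      (hupper.sublist ((List.sublist_cons_self c v₂).append_left _)) u₁
  have htail : KnuthEquiv (c :: v₂ ++ (u₂ ++ w)) (v₂ ++ c :: (u₂ ++ w)) := by
    have hbump : rowBumpWord (c :: v₂) (u₂ ++ w) = (c :: (u₂ ++ w), v₂) :=
      rowBumpWord_append_of_forall₂_lt h₂ (R := [c]) hlower
    simpa only [hbump] using
      knuthEquiv_rowBumpWord (List.pairwise_append.1 hupper).2.1 (u₂ ++ w)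
  have hmiddle := htail.append_left (z ++ R')
  have hstart := hwith.append_right (u₂ ++ w)
  have hend := hwithout.append_right (c :: (u₂ ++ w))
  simp only [List.append_assoc, List.cons_append] at hstart hmiddle hend ⊢
  exact hstart.trans (hmiddle.trans hend.symm)

/-- The 1-based column labels of the letters `x` of a labelled word, in reading order. -/
def labels (x : ℕ) (L : List (ℕ × Fin n)) : List ℕ :=
  L.filterMap fun a => if a.1 = x then some (a.2.1 + 1) else none

theorem ReadBefore.snd_lt_snd {a b : ℕ × Fin n} (h : ReadBefore a b) (hlt : b.1 < a.1) :
    a.2 < b.2 :=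
  h.resolve_right fun h' => h'.2.not_gt hlt

section Labels

variable {x y i : ℕ} {c : Fin n} {L L' : List (ℕ × Fin n)}

theorem labels_nil : labels x ([] : List (ℕ × Fin n)) = [] := rfl

theorem labels_append : labels x (L ++ L') = labels x L ++ labels x L' := by simp [labels]

theorem labels_cons_self : labels x ((x, c) :: L) = (c.1 + 1) :: labels x L := by simp [labels]

theorem labels_cons_of_ne (h : y ≠ x) : labels x ((y, c) :: L) = labels x L := by
  simp [labels, h]

theorem mem_labels {z : ℕ} : z ∈ labels x L ↔ ∃ c, (x, c) ∈ L ∧ c.1 + 1 = z := by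
  simp [labels]

theorem length_labels (x : ℕ) (L : List (ℕ × Fin n)) :
    (labels x L).length = (L.map Prod.fst).count x := by
  induction L with
  | nil => rfl
  | cons a L ih =>
    obtain ⟨y, c⟩ := a
    by_cases h : y = x
    · subst h
      simp [labels_cons_self, ih]
    · simp [labels_cons_of_ne h, ih, h]

theorem pairwise_le_labels (h : L.Pairwise ReadBefore) : (labels x L).Pairwise (· ≤ ·) := by
  rw [labels, List.pairwise_filterMap]
  refine h.imp fun {a b} hab p hp q hq => ?_
  grind [ReadBefore]

theorem exists_forall₂_lt_labels_of_no_unmatched_open (hL : L.Pairwise ReadBefore)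
    (h : (unmatched i (i + 1) (L.map Prod.fst)).2 = 0) :
    ∃ R v, labels i L = R ++ v ∧ List.Forall₂ (· < ·) (labels (i + 1) L) v := by
  induction L with
  | nil => exact ⟨[], [], rfl, .nil⟩
  | cons a L ih =>
    obtain ⟨x, c⟩ := a
    replace ⟨hc, hL⟩ := List.pairwise_cons.1 hL
    rw [List.map_cons, unmatched] at h
    split_ifs at h with hxi hxi'
    · subst hxi
      obtain ⟨R, v, hRv, hv⟩ := ih hL h
      exact ⟨(c.1 + 1) :: R, v, by simp [labels_cons_self, hRv],
        by rwa [labels_cons_of_ne (by omega)]⟩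
    · subst hxi'
      obtain ⟨R, v, hRv, hv⟩ := ih hL (by grind)
      have hR : R ≠ [] := by
        rintro rfl
        have hcount := unmatched_fst_add_count (by omega : i ≠ i + 1) (L.map Prod.fst)
        have hlen := hv.length_eq
        rw [List.nil_append] at hRv
        rw [← hRv, length_labels, length_labels] at hlen
        omega
      obtain ⟨R, z, rfl⟩ := (List.eq_nil_or_concat R).resolve_left hR
      have hz : c.1 + 1 < z := by
        obtain ⟨d, hd, rfl⟩ := mem_labels.1 (show z ∈ labels i L by simp [hRv])
        exact Nat.succ_lt_succ ((hc _ hd).snd_lt_snd (Nat.lt_succ_self i))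
      refine ⟨R, z :: v, by simp [labels_cons_of_ne, hRv], ?_⟩
      rw [labels_cons_self]
      exact .cons hz hv
    · rw [labels_cons_of_ne hxi, labels_cons_of_ne hxi']
      exact ih hL h

theorem exists_forall₂_lt_labels_of_no_unmatched_close (hL : L.Pairwise ReadBefore)
    (h : (unmatched i (i + 1) (L.map Prod.fst)).1 = 0) :
    ∃ u w, labels (i + 1) L = u ++ w ∧ List.Forall₂ (· < ·) u (labels i L) := by
  induction L using List.reverseRecOn with
  | nil => exact ⟨[], [], rfl, .nil⟩
  | append_singleton L a ih =>
    obtain ⟨x, c⟩ := a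
    obtain ⟨hL, -, hc⟩ := List.pairwise_append.1 hL
    rw [List.map_append, unmatched_append] at h
    obtain ⟨u, w, huw, hu⟩ := ih hL (by simp only at h; omega)
    rw [labels_append, labels_append]
    by_cases hxi : x = i
    · subst hxi
      have hw : w ≠ [] := by
        rintro rfl
        have hcount := unmatched_fst_add_count (by omega : x ≠ x + 1) (L.map Prod.fst)
        have hlen := hu.length_eq
        rw [List.append_nil] at huw
        rw [← huw, length_labels, length_labels] at hlen
        simp [unmatched] at h
        omega
      obtain ⟨z, w, rfl⟩ := List.exists_cons_of_ne_nil hw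
      have hz : z < c.1 + 1 := by
        obtain ⟨d, hd, rfl⟩ := mem_labels.1 (show z ∈ labels (x + 1) L by simp [huw])
        have hread := hc _ hd _ (List.mem_singleton_self (x, c))
        exact Nat.succ_lt_succ (hread.snd_lt_snd (Nat.lt_succ_self x))
      refine ⟨u ++ [z], w, by simp [labels_cons_of_ne, huw, labels_nil], ?_⟩
      rw [labels_cons_self, labels_nil]
      exact List.rel_append hu (.cons hz .nil)
    · exact ⟨u, w ++ labels (i + 1) [(x, c)], by simp [huw], by
        simpa [labels_cons_of_ne hxi, labels_nil] using hu⟩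

end Labels

theorem flatMap_eq_of_nodup {α β : Type} {l : List α} (hl : l.Nodup) {a : α} (ha : a ∈ l)
    {f : α → List β} (hf : ∀ b ∈ l, b ≠ a → f b = []) : l.flatMap f = f a := by
  obtain ⟨s, t, rfl⟩ := List.append_of_mem ha
  have hs : s.flatMap f = [] := List.flatMap_eq_nil_iff.2 fun b hb => hf b (by simp [hb]) (by grind)
  have ht : t.flatMap f = [] := List.flatMap_eq_nil_iff.2 fun b hb => hf b (by simp [hb]) (by grind)
  simp [hs, ht]

theorem labels_rowWordLbl (M : Matrix (Fin m) (Fin n) ℕ) (r : Fin m) :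
    labels (r.1 + 1) (rowWordLbl M) =
      (List.finRange n).flatMap fun c => List.replicate (M r c) (c.1 + 1) := by
  rw [labels, rowWordLbl, List.filterMap_flatMap]
  congr 1
  funext c
  rw [List.filterMap_flatMap, flatMap_eq_of_nodup (List.nodup_finRange m) (List.mem_finRange r)]
  · simp
  · intro s _ hsr
    simp [Fin.val_inj, hsr]

theorem colWord_eq_flatMap_labels (M : Matrix (Fin m) (Fin n) ℕ) :
    colWord M = (List.range m).flatMap fun r => labels (r + 1) (rowWordLbl M) := by
  rw [← List.map_coe_finRange_eq_range, List.flatMap_map]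
  simp only [labels_rowWordLbl]
  simp [colWord, rowWord, rowWordLbl, List.map_flatMap]

theorem knuthEquiv_flatMap_range {g g' : ℕ → List ℕ} {k : ℕ} (hk : k + 1 < m)
    (hne : ∀ r, r ≠ k → r ≠ k + 1 → g r = g' r)
    (hkk : KnuthEquiv (g k ++ g (k + 1)) (g' k ++ g' (k + 1))) :
    KnuthEquiv ((List.range m).flatMap g) ((List.range m).flatMap g') := by
  obtain ⟨l, rfl⟩ : ∃ l, m = k + 2 + l := ⟨m - (k + 2), by omega⟩
  have hbefore : (List.range k).flatMap g = (List.range k).flatMap g' :=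
    List.flatMap_congr fun r hr => hne r (by grind) (by grind)
  have hafter : ((List.range l).map (k + 2 + ·)).flatMap g =
      ((List.range l).map (k + 2 + ·)).flatMap g' :=
    List.flatMap_congr fun r hr => hne r (by grind) (by grind)
  simpa [List.range_add, List.range_succ, hbefore, hafter] using hkk.append_append
    ((List.range k).flatMap g') (((List.range l).map (k + 2 + ·)).flatMap g')

theorem IsLowering.knuthEquiv_labels {i : ℕ} {L L' : List (ℕ × Fin n)} (h : IsLowering i L L')
    (hL : L.Pairwise ReadBefore) (hL' : L'.Pairwise ReadBefore) :
    KnuthEquiv (labels i L ++ labels (i + 1) L) (labels i L' ++ labels (i + 1) L') := by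
  obtain ⟨A, B, c, rfl, rfl, hA, hB⟩ := h
  obtain ⟨hsortedA, hsortedB, -⟩ := List.pairwise_append.1 hL
  obtain ⟨R, v, hRv, hv⟩ := exists_forall₂_lt_labels_of_no_unmatched_open hsortedA hA
  obtain ⟨u, w, huw, hu⟩ := exists_forall₂_lt_labels_of_no_unmatched_close hsortedB.of_cons hB
  have hupper := pairwise_le_labels (x := i) hL
  have hlower := pairwise_le_labels (x := i + 1) (List.pairwise_append.1 hL').2.1
  rw [labels_append, labels_cons_self, hRv] at hupper
  rw [labels_cons_self, huw] at hlower
  simpa [labels_append, labels_cons_self, labels_cons_of_ne, hRv, huw] using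
    knuthEquiv_move_between_rows hv hu hupper hlower

theorem IsLowering.knuthEquiv_colWord {i : ℕ} (hi : 1 ≤ i) (him : i < m)
    {M N : Matrix (Fin m) (Fin n) ℕ} (h : IsLowering i (rowWordLbl M) (rowWordLbl N)) :
    KnuthEquiv (colWord M) (colWord N) := by
  obtain ⟨k, rfl⟩ := Nat.exists_eq_add_of_le' hi
  rw [colWord_eq_flatMap_labels, colWord_eq_flatMap_labels]
  refine knuthEquiv_flatMap_range him (fun r hr hr' => ?_) (h.knuthEquiv_labels
    (pairwise_readBefore_rowWordLbl M) (pairwise_readBefore_rowWordLbl N))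
  obtain ⟨A, B, c, hM, hN, -, -⟩ := h
  rw [hM, hN, labels_append, labels_append, labels_cons_of_ne (by omega),
    labels_cons_of_ne (by omega)]

/-! ### The RSK correspondence -/

section RSK

variable (M : Matrix (Fin m) (Fin n) ℕ) {i j : ℕ}

theorem map_RSKmap_frow (hi : 1 ≤ i) (him : i < m) :
    (frow i M).map RSKmap = (fTab i (tab (rowWord M))).map (·, tab (colWord M)) := by
  rw [fTab_tab]
  cases h : frow i M with
  | none => simp [fWord_eq_none_iff.2 (frow_eq_none_iff.1 h)]
  | some N =>
    have hlow := isLowering_of_frow_eq_some him h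
    have hrow : fWord i (rowWord M) = some (rowWord N) := hlow.fWord_eq
    simp [hrow, RSKmap, (hlow.knuthEquiv_colWord hi him).tab_eq]

theorem map_RSKmap_erow (hi : 1 ≤ i) (him : i < m) :
    (erow i M).map RSKmap = (eTab i (tab (rowWord M))).map (·, tab (colWord M)) := by
  cases h : erow i M with
  | none => simp [eTab_tab_eq_none_iff.2 (erow_eq_none_iff.1 h)]
  | some N =>
    have hlow := isLowering_of_erow_eq_some hi him h
    have hrow : fWord i (rowWord N) = some (rowWord M) := hlow.fWord_eq
    simp [eTab_tab_of_fWord_eq_some hrow, RSKmap, (hlow.knuthEquiv_colWord hi him).tab_eq]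

theorem RSKmap_transpose : RSKmap M.transpose = (RSKmap M).swap := rfl

theorem map_RSKmap_map_transpose (o : Option (Matrix (Fin n) (Fin m) ℕ)) :
    (o.map Matrix.transpose).map RSKmap = (o.map RSKmap).map Prod.swap := by
  cases o <;> simp [RSKmap_transpose]

theorem map_RSKmap_fcol (hj : 1 ≤ j) (hjn : j < n) :
    (fcol j M).map RSKmap = (fTab j (tab (colWord M))).map (tab (rowWord M), ·) := by
  rw [fcol, map_RSKmap_map_transpose, map_RSKmap_frow M.transpose hj hjn, Option.map_map]
  rfl

theorem map_RSKmap_ecol (hj : 1 ≤ j) (hjn : j < n) :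
    (ecol j M).map RSKmap = (eTab j (tab (colWord M))).map (tab (rowWord M), ·) := by
  rw [ecol, map_RSKmap_map_transpose, map_RSKmap_erow M.transpose hj hjn, Option.map_map]
  rfl

end RSK

end GCS

open GCS in
/-- Proposition `pullback`: the bicrystal operators on matrices are the
pullbacks of the tableau crystal operators along `RSK`.  With `RSK(M) = (P, Q)`:
`RSK(f_i^row M) = (f_i P, Q)`, `RSK(e_i^row M) = (e_i P, Q)`, `RSK(f_j^col M) = (P, f_j Q)`
and `RSK(e_j^col M) = (P, e_j Q)`, where the matrix operator returns `∅` exactly when the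
tableau operator does. -/
theorem rsk_pullback_of_bicrystal_ops
    (m n : ℕ) (M : Matrix (Fin m) (Fin n) ℕ) (P Q : List (List ℕ))
    (hP : P = tab (rowWord M)) (hQ : Q = tab (colWord M)) :
    (∀ i, 1 ≤ i → i ≤ m - 1 →
      Option.map RSKmap (frow i M) = Option.map (fun P' => (P', Q)) (fTab i P) ∧
      Option.map RSKmap (erow i M) = Option.map (fun P' => (P', Q)) (eTab i P)) ∧
    (∀ j, 1 ≤ j → j ≤ n - 1 →
      Option.map RSKmap (fcol j M) = Option.map (fun Q' => (P, Q')) (fTab j Q) ∧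
      Option.map RSKmap (ecol j M) = Option.map (fun Q' => (P, Q')) (eTab j Q)) := by
  subst hP hQ
  exact ⟨fun i hi him => ⟨map_RSKmap_frow M hi (by omega), map_RSKmap_erow M hi (by omega)⟩,
    fun j hj hjn => ⟨map_RSKmap_fcol M hj (by omega), map_RSKmap_ecol M hj (by omega)⟩⟩
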